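/- Let l ≥ 3, let α ∈ R^l be an admissible function, and let 1 ≤ i < j ≤ l. Then: (i) ρ^{(−4)}_{ij}α does not depend on z_j and, regarded as a function of the remaining l−2 variables, is an admissible function in R^{l−2}; (ii) ρ^{(−3)}_{ij}α = 0; (iii) ρ^{(−2)}_{ij}α is an admissible function in R^{l−1} (in the l−1 variables z₁,…,ẑ_i,…,z_l). -/

import Mathlib

open scoped Classical

noncomputable section

namespace Griess

open MvPolynomial

variable {k : Type} [Field k]

/-- The field `k(z₁,…,z_l)` of rational functions over `k` in `l` variables. -/
abbrev RF (k : Type) [Field k] (l : ℕ) : Type := FractionRing (MvPolynomial (Fin l) k)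

/-- The variable `zᵢ` as an element of the rational function field. -/
def zv {k : Type} [Field k] {l : ℕ} (i : Fin l) : RF k l :=
  algebraMap (MvPolynomial (Fin l) k) (RF k l) (MvPolynomial.X i)

/-- The space `Φ^l` of rational functions of the form
`p(z₁,…,z_l) · ∏_{i<j} (zᵢ - z_j)^{k_{ij}}`. -/
def Phi (k : Type) [Field k] (l : ℕ) : Set (RF k l) :=
  { x | ∃ (p : MvPolynomial (Fin l) k) (e : Fin l → Fin l → ℤ),
      x = algebraMap (MvPolynomial (Fin l) k) (RF k l) p *
        ∏ i : Fin l, ∏ j : Fin l, (if i < j then (zv i - zv j) ^ e i j else 1) }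

/-- `D` is the family of partial derivative operators `∂_{z₁},…,∂_{z_l}`:
a family of `k`-linear derivations with `D i (z j) = δ_{ij}`. -/
def IsPartialDeriv {l : ℕ} (D : Fin l → Derivation k (RF k l) (RF k l)) : Prop :=
  ∀ i j : Fin l, D i (zv j) = if j = i then 1 else 0

/-- The operator `Δ = Σᵢ ∂_{zᵢ}`. -/
def Delta {l : ℕ} (D : Fin l → Derivation k (RF k l) (RF k l)) (α : RF k l) : RF k l :=
  ∑ i, D i α

/-- The operator `Δ*(n₁,…,n_l) = Σᵢ (zᵢ² ∂_{zᵢ} + nᵢ zᵢ)`. -/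
def DeltaStar {l : ℕ} (D : Fin l → Derivation k (RF k l) (RF k l)) (n : Fin l → ℤ)
    (α : RF k l) : RF k l :=
  ∑ i, ((zv i) ^ 2 * D i α + (n i : RF k l) * zv i * α)

section Subst

variable {l : ℕ}

/-- The embedding of polynomials in `z₁,…,z_l` into rational functions of
`z₁,…,z_l` and one extra variable `t` (`= RatFunc.X`). -/
def toRatFuncHom (k : Type) [Field k] (l : ℕ) :
    Polynomial (MvPolynomial (Fin l) k) →+* RatFunc (RF k l) :=
  (algebraMap (Polynomial (RF k l)) (RatFunc (RF k l))).comp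
    (Polynomial.mapRingHom (algebraMap (MvPolynomial (Fin l) k) (RF k l)))

lemma toRatFuncHom_injective : Function.Injective (toRatFuncHom k l) := by
  have h1 : Function.Injective (algebraMap (Polynomial (RF k l)) (RatFunc (RF k l))) :=
    IsFractionRing.injective _ _
  have h2 : Function.Injective
      (Polynomial.mapRingHom (algebraMap (MvPolynomial (Fin l) k) (RF k l))) :=
    Polynomial.map_injective _ (IsFractionRing.injective _ _)
  exact fun a b hab => h2 (h1 hab)

/-- Polynomial level substitution `z_j ↦ t·z_j` for `j ∈ J`. -/
def scaleAux (k : Type) [Field k] (l : ℕ) (J : Finset (Fin l)) :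
    MvPolynomial (Fin l) k →+* Polynomial (MvPolynomial (Fin l) k) :=
  (MvPolynomial.aeval (R := k) fun i =>
    if i ∈ J then Polynomial.X * Polynomial.C (MvPolynomial.X i)
    else Polynomial.C (MvPolynomial.X i)).toRingHom

lemma scaleAux_injective (J : Finset (Fin l)) :
    Function.Injective (scaleAux k l J) := by
  have h : (Polynomial.evalRingHom (1 : MvPolynomial (Fin l) k)).comp (scaleAux k l J)
      = RingHom.id _ := by
    apply MvPolynomial.ringHom_ext
    · intro r; simp [scaleAux]
    · intro i; by_cases hi : i ∈ J <;> simp [scaleAux, hi]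
  intro p q hpq
  have hp := DFunLike.congr_fun h p
  have hq := DFunLike.congr_fun h q
  simp only [RingHom.comp_apply, RingHom.id_apply] at hp hq
  rw [← hp, ← hq, hpq]

/-- The substitution `z_j ↦ t·z_j` (for `j ∈ J`), as a map from rational functions
in `z₁,…,z_l` to rational functions in `z₁,…,z_l` and `t`.  Reading off the
coefficients of the Laurent expansion in `t` at `t = 0` of `scaleJ J α` yields the
decomposition of `α` into its homogeneous components with respect to the total degree
in the variables `{z_j : j ∈ J}`, i.e. the expansion of `α` in the domain where the
variables of `J` are much smaller than the remaining variables. -/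
def scaleJ (J : Finset (Fin l)) : RF k l →+* RatFunc (RF k l) :=
  IsFractionRing.lift (g := (toRatFuncHom k l).comp (scaleAux k l J))
    (fun a b hab => scaleAux_injective J (toRatFuncHom_injective hab))

/-- Polynomial level substitution `z_i ↦ z_j + t`. -/
def subPairAux (k : Type) [Field k] (l : ℕ) (i j : Fin l) :
    MvPolynomial (Fin l) k →+* Polynomial (MvPolynomial (Fin l) k) :=
  (MvPolynomial.aeval (R := k) fun s =>
    if s = i then Polynomial.X + Polynomial.C (MvPolynomial.X j)
    else Polynomial.C (MvPolynomial.X s)).toRingHom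

lemma subPairAux_injective (i j : Fin l) :
    Function.Injective (subPairAux k l i j) := by
  have h : (Polynomial.evalRingHom (MvPolynomial.X i - MvPolynomial.X j)).comp
      (subPairAux k l i j) = RingHom.id _ := by
    apply MvPolynomial.ringHom_ext
    · intro r; simp [subPairAux]
    · intro s; by_cases hs : s = i <;> simp [subPairAux, hs]
  intro p q hpq
  have hp := DFunLike.congr_fun h p
  have hq := DFunLike.congr_fun h q
  simp only [RingHom.comp_apply, RingHom.id_apply] at hp hq
  rw [← hp, ← hq, hpq]

/-- The substitution `z_i ↦ z_j + t`, as a map from rational functions in `z₁,…,z_l`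
to rational functions in the variables `z₁,…,z_l` and `t`.  Reading off the Laurent
coefficients in `t` at `t = 0` yields the expansion of a rational function in powers
of `z_i - z_j`, with coefficients not involving `z_i`. -/
def subPair (i j : Fin l) : RF k l →+* RatFunc (RF k l) :=
  IsFractionRing.lift (g := (toRatFuncHom k l).comp (subPairAux k l i j))
    (fun a b hab => subPairAux_injective i j (toRatFuncHom_injective hab))

end Subst

/-- The coefficient of `tᵐ` in the Laurent expansion at `t = 0` of a rational
function of `t`. -/
def lcoeff {L : Type} [Field L] (m : ℤ) (f : RatFunc L) : L :=
  (f : LaurentSeries L).coeff m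

/-- The component `(α)_n` of `α` of degree `n` with respect to the partition
`{1,…,l} = Jᶜ ⊔ J` and the weights `d`:  the part of the expansion of `α` in the
domain where the variables of `J` are much smaller than those of `Jᶜ` whose total
degree in the variables `{z_j : j ∈ J}` equals `n - Σ_{j∈J} d_j`. -/
def component {l : ℕ} (J : Finset (Fin l)) (d : Fin l → ℤ) (n : ℤ) (α : RF k l) :
    RF k l :=
  lcoeff (n - ∑ j ∈ J, d j) (scaleJ J α)

/-- `α` is homogeneous of total degree `d` in the variables `{z_i : i ∈ S}`:
substituting `z_i ↦ t·z_i` for `i ∈ S` multiplies `α` by `t^d`. -/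
def IsHomogeneousOn {l : ℕ} (S : Finset (Fin l)) (d : ℤ) (α : RF k l) : Prop :=
  scaleJ S α = RatFunc.X ^ d * RatFunc.C α

/-- `ρ^{(m)}_{ij} α`: the coefficient of `(z_i - z_j)^m` in the expansion of `α`
in powers of `z_i - z_j` (the coefficients do not involve `z_i`). -/
def rho {l : ℕ} (i j : Fin l) (m : ℤ) (α : RF k l) : RF k l :=
  lcoeff m (subPair i j α)

/-- `α` is a rational function of the variables `{z_i : i ∈ S}` only. -/
def dependsOnlyOn {l : ℕ} (S : Finset (Fin l)) (α : RF k l) : Prop :=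
  α ∈ Subfield.closure (Set.range (algebraMap k (RF k l)) ∪ {x | ∃ i ∈ S, x = zv i})

/-- `α` is an admissible function of the variables `{z_i : i ∈ S}` (the space
`R^{|S|}`):  `α ∈ Φ` is a rational function of the variables of `S` only, it is
`(4,…,4)`-regular and homogeneous of degree `-2|S|` in these variables, and all its
components of negative degree, as well as those of degree `1`, vanish (with respect
to every partition of `S` and all weights equal to `2`). -/
def Admissible {l : ℕ} (D : Fin l → Derivation k (RF k l) (RF k l)) (S : Finset (Fin l))
    (α : RF k l) : Prop :=
  α ∈ Phi k l ∧ dependsOnlyOn S α ∧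
    (∑ i ∈ S, ((zv i) ^ 2 * D i α + 4 * zv i * α)) = 0 ∧
    IsHomogeneousOn S (-(2 * (S.card : ℤ))) α ∧
    ∀ J ⊆ S, ∀ n : ℤ, (n < 0 ∨ n = 1) → component J (fun _ => 2) n α = 0

/-- `α` is an indecomposable admissible function of the variables `{z_i : i ∈ S}`
(the space `R₀^{|S|}`): admissible, and all the components `(α)₀` with respect to
partitions of `S` into two nonempty parts vanish. -/
def AdmissibleInd {l : ℕ} (D : Fin l → Derivation k (RF k l) (RF k l))
    (S : Finset (Fin l)) (α : RF k l) : Prop :=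
  Admissible D S α ∧
    ∀ J ⊆ S, J ≠ ∅ → J ≠ S → component J (fun _ => 2) 0 α = 0

section Shift

variable {l : ℕ}

/-- Polynomial level substitution `z_s ↦ z_s - z_t` for `s ∈ S`. -/
def shiftAuxP (k : Type) [Field k] (l : ℕ) (S : Finset (Fin l)) (t : Fin l) :
    MvPolynomial (Fin l) k →+* MvPolynomial (Fin l) k :=
  (MvPolynomial.aeval (R := k) fun s =>
    if s ∈ S then MvPolynomial.X s - MvPolynomial.X t else MvPolynomial.X s).toRingHom

lemma shiftAuxP_injective (S : Finset (Fin l)) (t : Fin l) (ht : t ∉ S) :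
    Function.Injective (shiftAuxP k l S t) := by
  have h : ((MvPolynomial.aeval (R := k) fun s =>
      if s ∈ S then MvPolynomial.X s + MvPolynomial.X t
      else MvPolynomial.X s).toRingHom).comp (shiftAuxP k l S t) = RingHom.id _ := by
    apply MvPolynomial.ringHom_ext
    · intro r; simp [shiftAuxP]
    · intro s
      by_cases hs : s ∈ S
      · have hst : s ≠ t := fun hst => ht (hst ▸ hs)
        simp [shiftAuxP, hs, ht]
      · simp [shiftAuxP, hs]
  intro p q hpq
  have hp := DFunLike.congr_fun h p
  have hq := DFunLike.congr_fun h q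
  simp only [RingHom.comp_apply, RingHom.id_apply] at hp hq
  rw [← hp, ← hq, hpq]

/-- The shift operator substituting `z_s - z_t` for `z_s`, for all `s ∈ S`. -/
def shiftT (S : Finset (Fin l)) (t : Fin l) (ht : t ∉ S) : RF k l →+* RF k l :=
  IsFractionRing.lift
    (g := (algebraMap (MvPolynomial (Fin l) k) (RF k l)).comp (shiftAuxP k l S t))
    (fun a b hab =>
      shiftAuxP_injective S t ht (IsFractionRing.injective _ _ hab))

/-- The operator `ℰ = Σ_{s ∈ S} (-z_s⁻¹ ∂_{z_s} + 2 z_s⁻²)`. -/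
def curlyE {l : ℕ} (D : Fin l → Derivation k (RF k l) (RF k l)) (S : Finset (Fin l))
    (β : RF k l) : RF k l :=
  ∑ s ∈ S, (-((zv s)⁻¹ * D s β) + 2 * (zv s) ^ (-2 : ℤ) * β)

end Shift

end Griess

namespace Griess

section Helpers

open MvPolynomial

variable {k : Type} [Field k]

section Laurent
variable {L : Type} [Field L]

/-- coefficientwise operator on Laurent series -/
def cw (E : ℤ → L →+ L) (f : LaurentSeries L) : LaurentSeries L where
  coeff n := E n (f.coeff n)
  isPWO_support' := f.isPWO_support.mono (by
    intro n hn
    simp only [Function.mem_support, HahnSeries.mem_support] at hn ⊢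
    intro h; apply hn; rw [h]; simp)

lemma cw_coeff (E : ℤ → L →+ L) (f : LaurentSeries L) (n : ℤ) :
    (cw E f).coeff n = E n (f.coeff n) := rfl

lemma cw_add (E : ℤ → L →+ L) (f g : LaurentSeries L) : cw E (f + g) = cw E f + cw E g := by
  ext n; simp [cw_coeff]

lemma cw_single (E : ℤ → L →+ L) (n : ℤ) (a : L) :
    cw E (HahnSeries.single n a) = HahnSeries.single n (E n a) := by
  ext m
  rw [cw_coeff]
  by_cases h : m = n
  · subst h; simp
  · simp [HahnSeries.coeff_single_of_ne h]

lemma cw_mul (E : ℤ → L →+ L)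
    (hE : ∀ m n a b, E (m + n) (a * b) = a * E n b + b * E m a) (f g : LaurentSeries L) :
    cw E (f * g) = f * cw E g + g * cw E f := by
  have hsub : ∀ h : LaurentSeries L, (cw E h).support ⊆ h.support := by
    intro h n hn
    simp only [HahnSeries.mem_support, cw_coeff] at hn ⊢
    intro h0; apply hn; rw [h0]; simp
  ext n
  rw [mul_comm g, HahnSeries.coeff_add, cw_coeff, HahnSeries.coeff_mul,
    HahnSeries.coeff_mul_right' g.isPWO_support (hsub g),
    HahnSeries.coeff_mul_left' f.isPWO_support (hsub f), ← Finset.sum_add_distrib, map_sum]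
  apply Finset.sum_congr rfl
  intro p hp
  rw [Finset.mem_antidiagonal] at hp
  rw [← hp.2.2, hE, cw_coeff, cw_coeff]
  ring

/-- the operator `t d/dt` -/
def thetaE : ℤ → L →+ L := fun n => AddMonoidHom.mulLeft (n : L)

lemma thetaE_leib (m n : ℤ) (a b : L) :
    thetaE (m + n) (a * b) = a * thetaE n b + b * thetaE m a := by
  simp [thetaE]; ring

lemma inv_lin (a b : L) (ha : a ≠ 0) (n : ℤ) :
    ((HahnSeries.C a + HahnSeries.single 1 b : LaurentSeries L)⁻¹).coeff n
      = if n < 0 then 0 else (-b) ^ n.toNat * a⁻¹ ^ (n.toNat + 1) := by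
  let g : PowerSeries L := PowerSeries.mk fun n => (-b) ^ n * a⁻¹ ^ (n + 1)
  have h : (HahnSeries.C a + HahnSeries.single 1 b : LaurentSeries L) * (g : LaurentSeries L) = 1 := by
    have h1 : (HahnSeries.C a + HahnSeries.single 1 b : LaurentSeries L)
        = ((PowerSeries.C a + PowerSeries.X * PowerSeries.C b : PowerSeries L) : LaurentSeries L) := by
      rw [PowerSeries.coe_add, PowerSeries.coe_mul, PowerSeries.coe_C, PowerSeries.coe_C,
        PowerSeries.coe_X, HahnSeries.C_apply, HahnSeries.C_apply, HahnSeries.single_mul_single]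
      simp
    rw [h1, ← PowerSeries.coe_mul, ← PowerSeries.coe_one]
    congr 1
    ext n
    rw [add_mul, mul_assoc, map_add, PowerSeries.coeff_C_mul]
    cases n with
    | zero => simp [g, ha]
    | succ n =>
      rw [PowerSeries.coeff_succ_X_mul, PowerSeries.coeff_C_mul]
      simp [g, PowerSeries.coeff_one]
      field_simp
      ring
  rw [inv_eq_of_mul_eq_one_right h]
  rw [PowerSeries.coeff_coe]
  split_ifs with hn
  · rfl
  · simp [g]
    have : n.natAbs = n.toNat := by omega
    rw [this]

end Laurent

section R2L
variable (L : Type) [Field L]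

/-- rational functions to Laurent series -/
def r2l : RatFunc L →+* LaurentSeries L :=
  letI := RatFunc.liftAlgebra L (LaurentSeries L)
  algebraMap (RatFunc L) (LaurentSeries L)

lemma ratC (a : L) : r2l L (RatFunc.C a) = HahnSeries.C a := by
  have h := RatFunc.coe_coe (Polynomial.C a)
  rw [Polynomial.coe_C, PowerSeries.coe_C] at h
  rw [h, ← RatFunc.algebraMap_C]; rfl

lemma ratX : r2l L RatFunc.X = HahnSeries.single 1 1 := RatFunc.coe_X

lemma lcoeff_r2l (m : ℤ) (f : RatFunc L) : lcoeff m f = (r2l L f).coeff m := rfl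

end R2L

section Basic
variable {l : ℕ}

/-- expansion in powers of `z_i - z_j` as Laurent series -/
def SP (i j : Fin l) : RF k l →+* LaurentSeries (RF k l) :=
  (r2l (RF k l)).comp (subPair i j)

/-- scaling expansion as Laurent series -/
def SC (J : Finset (Fin l)) : RF k l →+* LaurentSeries (RF k l) :=
  (r2l (RF k l)).comp (scaleJ J)

lemma rho_eq (i j : Fin l) (m : ℤ) (α : RF k l) : rho i j m α = (SP i j α).coeff m := by
  rw [rho, lcoeff_r2l]; rfl

lemma component_eq (J : Finset (Fin l)) (d : Fin l → ℤ) (n : ℤ) (α : RF k l) :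
    component J d n α = (SC J α).coeff (n - ∑ j ∈ J, d j) := by
  rw [component, lcoeff_r2l]; rfl

lemma toRat_X : toRatFuncHom k l Polynomial.X = RatFunc.X := by
  simp [toRatFuncHom]

lemma toRat_C (p : MvPolynomial (Fin l) k) :
    toRatFuncHom k l (Polynomial.C p) = RatFunc.C (algebraMap _ (RF k l) p) := by
  simp [toRatFuncHom]

lemma SP_poly (i j : Fin l) (p : MvPolynomial (Fin l) k) :
    SP i j (algebraMap _ (RF k l) p)
      = r2l (RF k l)
        (toRatFuncHom k l (subPairAux k l i j p)) := by
  simp only [SP, RingHom.comp_apply]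
  congr 1
  exact IsFractionRing.lift_algebraMap _ _

lemma SC_poly (J : Finset (Fin l)) (p : MvPolynomial (Fin l) k) :
    SC J (algebraMap _ (RF k l) p)
      = r2l (RF k l)
        (toRatFuncHom k l (scaleAux k l J p)) := by
  simp only [SC, RingHom.comp_apply]
  congr 1
  exact IsFractionRing.lift_algebraMap _ _

lemma kmap (c : k) : algebraMap k (RF k l) c = algebraMap (MvPolynomial (Fin l) k) (RF k l) (MvPolynomial.C c) := by
  rw [IsScalarTower.algebraMap_apply k (MvPolynomial (Fin l) k) (RF k l)]; rfl

lemma SP_const (i j : Fin l) (c : k) :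
    SP i j (algebraMap k (RF k l) c) = HahnSeries.C (algebraMap k (RF k l) c) := by
  rw [kmap, SP_poly]
  have : subPairAux k l i j (MvPolynomial.C c) = Polynomial.C (MvPolynomial.C c) := by
    simp [subPairAux, Polynomial.algebraMap_apply]
  rw [this, toRat_C, ratC]

lemma SC_const (J : Finset (Fin l)) (c : k) :
    SC J (algebraMap k (RF k l) c) = HahnSeries.C (algebraMap k (RF k l) c) := by
  rw [kmap, SC_poly]
  have : scaleAux k l J (MvPolynomial.C c) = Polynomial.C (MvPolynomial.C c) := by
    simp [scaleAux, Polynomial.algebraMap_apply]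
  rw [this, toRat_C, ratC]

lemma SP_zv_ne (i j s : Fin l) (h : s ≠ i) :
    SP i j (zv s : RF k l) = HahnSeries.C (zv s) := by
  rw [zv, SP_poly]
  have : subPairAux k l i j (MvPolynomial.X s) = Polynomial.C (MvPolynomial.X s) := by
    simp [subPairAux, h]
  rw [this, toRat_C, ratC]

lemma SP_zv_self (i j : Fin l) :
    SP i j (zv i : RF k l) = HahnSeries.C (zv j) + HahnSeries.single 1 1 := by
  rw [zv, SP_poly]
  have : subPairAux k l i j (MvPolynomial.X i)
      = Polynomial.X + Polynomial.C (MvPolynomial.X j) := by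
    simp [subPairAux]
  rw [this, map_add, map_add, toRat_C, ratC, toRat_X, ratX, add_comm]; rfl

lemma SC_zv_mem (J : Finset (Fin l)) (s : Fin l) (h : s ∈ J) :
    SC J (zv s : RF k l) = HahnSeries.single 1 (zv s) := by
  rw [zv, SC_poly]
  have : scaleAux k l J (MvPolynomial.X s) = Polynomial.X * Polynomial.C (MvPolynomial.X s) := by
    simp [scaleAux, h]
  rw [this, map_mul, map_mul, toRat_C, ratC, toRat_X, ratX, HahnSeries.C_apply,
    HahnSeries.single_mul_single]
  simp

lemma SC_zv_not (J : Finset (Fin l)) (s : Fin l) (h : s ∉ J) :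
    SC J (zv s : RF k l) = HahnSeries.C (zv s) := by
  rw [zv, SC_poly]
  have : scaleAux k l J (MvPolynomial.X s) = Polynomial.C (MvPolynomial.X s) := by
    simp [scaleAux, h]
  rw [this, toRat_C, ratC]

lemma zv_ne_zero (s : Fin l) : (zv s : RF k l) ≠ 0 := by
  rw [zv, Ne, map_eq_zero_iff _ (IsFractionRing.injective _ _)]
  exact MvPolynomial.X_ne_zero s

lemma zv_sub_ne_zero {s t : Fin l} (h : s ≠ t) : (zv s - zv t : RF k l) ≠ 0 := by
  rw [zv, zv, ← map_sub, Ne, map_eq_zero_iff _ (IsFractionRing.injective _ _), sub_eq_zero]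
  exact fun h' => h (MvPolynomial.X_injective h')

lemma der_zero {L : Type} [Field L] (φ : RF k l →+* L) (d : RF k l → L)
    (hadd : ∀ x y, d (x + y) = d x + d y)
    (hmul : ∀ x y, d (x * y) = φ x * d y + φ y * d x)
    (hc : ∀ c : k, d (algebraMap k _ c) = 0) (hz : ∀ s, d (zv s) = 0) (x : RF k l) : d x = 0 := by
  have hp : ∀ p : MvPolynomial (Fin l) k, d (algebraMap _ _ p) = 0 := by
    intro p
    induction p using MvPolynomial.induction_on with
    | C a => rw [← kmap]; exact hc a
    | add p q hp hq => rw [map_add, hadd, hp, hq, add_zero]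
    | mul_X p s hp => rw [map_mul, hmul, hp]; have := hz s; rw [zv] at this; rw [this]; simp
  obtain ⟨p, q, hq, rfl⟩ := IsFractionRing.div_surjective (A := MvPolynomial (Fin l) k) x
  have hq0 : algebraMap _ (RF k l) q ≠ 0 := by
    rw [Ne, map_eq_zero_iff _ (IsFractionRing.injective _ _)]
    exact nonZeroDivisors.ne_zero hq
  have h := hmul (algebraMap _ _ p / algebraMap _ _ q) (algebraMap _ _ q)
  rw [div_mul_cancel₀ _ hq0, hp, hp, mul_zero, zero_add] at h
  rcases mul_eq_zero.1 h.symm with h | h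
  · exact absurd ((map_eq_zero φ).1 h) hq0
  · exact h

lemma der_unique {L : Type} [Field L] (φ : RF k l →+* L) (d e : RF k l → L)
    (hadd : ∀ x y, d (x + y) = d x + d y)
    (hmul : ∀ x y, d (x * y) = φ x * d y + φ y * d x)
    (eadd : ∀ x y, e (x + y) = e x + e y)
    (emul : ∀ x y, e (x * y) = φ x * e y + φ y * e x)
    (hc : ∀ c : k, d (algebraMap k _ c) = e (algebraMap k _ c))
    (hz : ∀ s, d (zv s) = e (zv s)) (x : RF k l) : d x = e x := by
  have := der_zero φ (fun x => d x - e x) (fun x y => by simp only [hadd, eadd]; ring)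
    (fun x y => by simp only [hmul, emul]; ring) (fun c => by simp [hc]) (fun s => by simp [hz]) x
  exact sub_eq_zero.1 this

end Basic

section Der
variable {l : ℕ}

/-- the constant family of additive maps attached to a derivation -/
def cD (d : Derivation k (RF k l) (RF k l)) : ℤ → RF k l →+ RF k l :=
  fun _ => d.toLinearMap.toAddMonoidHom

lemma cD_apply (d : Derivation k (RF k l) (RF k l)) (n : ℤ) (x : RF k l) : cD d n x = d x := rfl

lemma cD_leib (d : Derivation k (RF k l) (RF k l)) (m n : ℤ) (a b : RF k l) :
    cD d (m + n) (a * b) = a * cD d n b + b * cD d m a := by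
  simp [cD_apply, Derivation.leibniz]

/-- weighted sum of partial derivatives -/
def dsum (D : Fin l → Derivation k (RF k l) (RF k l)) (S : Finset (Fin l)) (c : Fin l → RF k l) :
    Derivation k (RF k l) (RF k l) := ∑ s ∈ S, c s • D s

lemma dsum_apply (D : Fin l → Derivation k (RF k l) (RF k l)) (S : Finset (Fin l))
    (c : Fin l → RF k l) (x : RF k l) : dsum D S c x = ∑ s ∈ S, c s * D s x := by
  have : dsum D S c x = Derivation.coeFnAddMonoidHom (∑ s ∈ S, c s • D s) x := rfl
  rw [this, map_sum, Finset.sum_apply]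
  rfl

lemma dsum_zv (D : Fin l → Derivation k (RF k l) (RF k l)) (hD : IsPartialDeriv D)
    (S : Finset (Fin l)) (c : Fin l → RF k l) (t : Fin l) :
    dsum D S c (zv t) = if t ∈ S then c t else 0 := by
  rw [dsum_apply]
  simp [hD _ t]

lemma cD_C (d : Derivation k (RF k l) (RF k l)) (a : RF k l) :
    cw (cD d) (HahnSeries.C a) = HahnSeries.C (d a) := by
  rw [HahnSeries.C_apply, cw_single]; rfl

lemma theta_C (a : RF k l) : cw thetaE (HahnSeries.C a) = 0 := by
  rw [HahnSeries.C_apply, cw_single]; simp [thetaE]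

lemma theta_X (a : RF k l) : cw thetaE (HahnSeries.single 1 a) = HahnSeries.single 1 a := by
  rw [cw_single]; simp [thetaE]

lemma SP_E (D : Fin l → Derivation k (RF k l) (RF k l)) (hD : IsPartialDeriv D) (i j : Fin l)
    (hij : i ≠ j) (x : RF k l) :
    SP i j (dsum D Finset.univ (fun _ => 1) x)
      = cw (cD (dsum D Finset.univ (fun _ => 1))) (SP i j x) := by
  refine der_unique (SP i j) (fun x => SP i j (dsum D Finset.univ (fun _ => 1) x))
    (fun x => cw (cD (dsum D Finset.univ (fun _ => 1))) (SP i j x)) ?_ ?_ ?_ ?_ ?_ ?_ x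
  · intro x y; simp
  · intro x y; simp [Derivation.leibniz]
  · intro x y; rw [map_add, cw_add]
  · intro x y; rw [map_mul, cw_mul _ (cD_leib _)]
  · intro c; rw [SP_const, cD_C, Derivation.map_algebraMap]; simp
  · intro s
    rw [dsum_zv D hD]
    by_cases hs : s = i
    · subst hs
      rw [SP_zv_self, cw_add, cD_C, cw_single, cD_apply, dsum_zv D hD]
      simp
    · rw [SP_zv_ne _ _ _ hs, cD_C, dsum_zv D hD]; simp

lemma SP_Di (D : Fin l → Derivation k (RF k l) (RF k l)) (hD : IsPartialDeriv D) (i j : Fin l)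
    (x : RF k l) :
    HahnSeries.single 1 1 * SP i j (D i x) = cw thetaE (SP i j x) := by
  refine der_unique (SP i j) (fun x => HahnSeries.single 1 1 * SP i j (D i x))
    (fun x => cw thetaE (SP i j x)) ?_ ?_ ?_ ?_ ?_ ?_ x
  · intro x y; simp [mul_add]
  · intro x y; simp [Derivation.leibniz]; ring
  · intro x y; rw [map_add, cw_add]
  · intro x y; rw [map_mul, cw_mul _ thetaE_leib]
  · intro c; rw [SP_const, theta_C, Derivation.map_algebraMap]; simp
  · intro s
    rw [hD]
    by_cases hs : s = i
    · subst hs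
      rw [SP_zv_self, cw_add, theta_C, theta_X]
      simp
    · rw [SP_zv_ne _ _ _ hs, theta_C]; simp [hs]

lemma SP_F (D : Fin l → Derivation k (RF k l) (RF k l)) (hD : IsPartialDeriv D) (i j : Fin l)
    (hij : i ≠ j) (x : RF k l) :
    SP i j (dsum D Finset.univ (fun s => zv s ^ 2) x)
      = cw (cD (dsum D {i}ᶜ (fun s => zv s ^ 2))) (SP i j x)
        + (HahnSeries.C (2 * zv j) + HahnSeries.single 1 1) * cw thetaE (SP i j x) := by
  refine der_unique (SP i j) (fun x => SP i j (dsum D Finset.univ (fun s => zv s ^ 2) x))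
    (fun x => cw (cD (dsum D {i}ᶜ (fun s => zv s ^ 2))) (SP i j x)
        + (HahnSeries.C (2 * zv j) + HahnSeries.single 1 1) * cw thetaE (SP i j x)) ?_ ?_ ?_ ?_ ?_ ?_ x
  · intro x y; simp
  · intro x y; simp [Derivation.leibniz]
  · intro x y; rw [map_add, cw_add, cw_add]; ring
  · intro x y; rw [map_mul, cw_mul _ thetaE_leib, cw_mul _ (cD_leib _)]; ring
  · intro c; rw [SP_const, theta_C, cD_C, Derivation.map_algebraMap, Derivation.map_algebraMap]; simp
  · intro s
    rw [dsum_zv D hD]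
    by_cases hs : s = i
    · subst hs
      rw [if_pos (Finset.mem_univ _), map_pow, SP_zv_self, cw_add, cw_add, theta_C, theta_X, cD_C, cw_single, cD_apply, dsum_zv D hD, if_pos (by simpa using hij.symm),
        Derivation.map_one_eq_zero, map_pow, map_mul, map_ofNat]
      rw [map_zero]
      ring
    · rw [if_pos (Finset.mem_univ _), map_pow, SP_zv_ne _ _ _ hs, theta_C, cD_C, dsum_zv D hD,
        if_pos (by simpa using hs), map_pow]; simp

lemma SC_H (D : Fin l → Derivation k (RF k l) (RF k l)) (hD : IsPartialDeriv D)
    (J : Finset (Fin l)) (x : RF k l) :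
    cw (cD (dsum D J zv)) (SC J x) = cw thetaE (SC J x) := by
  refine der_unique (SC J) (fun x => cw (cD (dsum D J zv)) (SC J x))
    (fun x => cw thetaE (SC J x)) ?_ ?_ ?_ ?_ ?_ ?_ x
  · intro x y; rw [map_add, cw_add]
  · intro x y; rw [map_mul, cw_mul _ (cD_leib _)]
  · intro x y; rw [map_add, cw_add]
  · intro x y; rw [map_mul, cw_mul _ thetaE_leib]
  · intro c; rw [SC_const, theta_C, cD_C, Derivation.map_algebraMap]; simp
  · intro s
    by_cases hs : s ∈ J
    · rw [SC_zv_mem _ _ hs, theta_X, cw_single, cD_apply, dsum_zv D hD, if_pos hs]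
    · rw [SC_zv_not _ _ hs, theta_C, cD_C, dsum_zv D hD, if_neg hs]; simp

lemma SC_not (D : Fin l → Derivation k (RF k l) (RF k l)) (hD : IsPartialDeriv D)
    (J S : Finset (Fin l)) (h : Disjoint S J) (x : RF k l) :
    SC J (dsum D S (fun _ => 1) x) = cw (cD (dsum D S (fun _ => 1))) (SC J x) := by
  refine der_unique (SC J) (fun x => SC J (dsum D S (fun _ => 1) x))
    (fun x => cw (cD (dsum D S (fun _ => 1))) (SC J x)) ?_ ?_ ?_ ?_ ?_ ?_ x
  · intro x y; simp
  · intro x y; simp [Derivation.leibniz]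
  · intro x y; rw [map_add, cw_add]
  · intro x y; rw [map_mul, cw_mul _ (cD_leib _)]
  · intro c; rw [SC_const, cD_C, Derivation.map_algebraMap]; simp
  · intro s
    rw [dsum_zv D hD]
    by_cases hs : s ∈ J
    · have : s ∉ S := fun h' => Finset.disjoint_left.1 h h' hs
      rw [SC_zv_mem _ _ hs, cw_single, cD_apply, dsum_zv D hD, if_neg this]; simp
    · rw [SC_zv_not _ _ hs, cD_C, dsum_zv D hD]; split_ifs <;> simp

lemma SC_mem (D : Fin l → Derivation k (RF k l) (RF k l)) (hD : IsPartialDeriv D)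
    (J : Finset (Fin l)) (j : Fin l) (h : j ∈ J) (x : RF k l) :
    HahnSeries.single 1 1 * SC J (D j x) = cw (cD (D j)) (SC J x) := by
  refine der_unique (SC J) (fun x => HahnSeries.single 1 1 * SC J (D j x))
    (fun x => cw (cD (D j)) (SC J x)) ?_ ?_ ?_ ?_ ?_ ?_ x
  · intro x y; simp [mul_add]
  · intro x y; simp [Derivation.leibniz]; ring
  · intro x y; rw [map_add, cw_add]
  · intro x y; rw [map_mul, cw_mul _ (cD_leib _)]
  · intro c; rw [SC_const, cD_C, Derivation.map_algebraMap]; simp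
  · intro s
    rw [hD]
    by_cases hs : s ∈ J
    · rw [SC_zv_mem _ _ hs, cw_single, cD_apply, hD]; split_ifs <;> simp
    · have : s ≠ j := fun h' => hs (h' ▸ h)
      rw [SC_zv_not _ _ hs, cD_C, hD]; simp [this]

lemma charZero_RF [CharZero k] : CharZero (RF k l) :=
  charZero_of_injective_algebraMap (algebraMap k (RF k l)).injective

/-- the total translation operator -/
abbrev EE (D : Fin l → Derivation k (RF k l) (RF k l)) : Derivation k (RF k l) (RF k l) :=
  dsum D Finset.univ (fun _ => 1)

lemma EE_split (D : Fin l → Derivation k (RF k l) (RF k l)) (j : Fin l) (x : RF k l) :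
    EE D x = D j x + dsum D {j}ᶜ (fun _ => 1) x := by
  rw [dsum_apply, dsum_apply, Finset.compl_singleton, ← Finset.add_sum_erase _ _ (Finset.mem_univ j)]
  simp

lemma zero_of_EE [CharZero k] (D : Fin l → Derivation k (RF k l) (RF k l)) (hD : IsPartialDeriv D)
    (j : Fin l) (β : RF k l) (hE : EE D β = 0) (h0 : (SC {j} β).coeff 0 = 0) : β = 0 := by
  have := charZero_RF (k := k) (l := l)
  by_contra hβ
  set f := SC {j} β with hf
  have hf0 : f ≠ 0 := by rwa [hf, Ne, map_eq_zero]
  have hc : f.coeff f.order ≠ 0 := by simpa using hf0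
  have hlow : f.coeff (f.order - 1) = 0 := HahnSeries.coeff_eq_zero_of_lt_order (by omega)
  have hn : f.order ≠ 0 := fun h => hc (by rw [h, h0])
  have h1 : cw (cD (D j)) f + HahnSeries.single 1 1 * cw (cD (dsum D {j}ᶜ (fun _ => 1))) f = 0 := by
    rw [hf, ← SC_mem D hD _ _ (Finset.mem_singleton_self j), ← SC_not D hD _ _ (by simp), ← mul_add,
      ← map_add, ← EE_split, hE, map_zero, mul_zero]
  have h2 : D j (f.coeff f.order) = 0 := by
    have := congrArg (fun g => HahnSeries.coeff g f.order) h1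
    simpa [cw_coeff, HahnSeries.coeff_single_mul, cD_apply, hlow] using this
  have h3 := congrArg (fun g => HahnSeries.coeff g f.order) (SC_H D hD {j} β)
  simp only [cw_coeff, cD_apply, dsum_apply, Finset.sum_singleton, ← hf, h2, mul_zero] at h3
  have h4 : ((f.order : ℤ) : RF k l) * f.coeff f.order = 0 := h3.symm
  rcases mul_eq_zero.1 h4 with h | h
  · exact hn (by exact_mod_cast h)
  · exact hc h

end Der

section Trans
variable {l : ℕ}

lemma der_ext (d e : Derivation k (RF k l) (RF k l)) (h : ∀ s, d (zv s) = e (zv s)) (x : RF k l) :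
    d x = e x := by
  refine der_unique (RingHom.id _) d e ?_ ?_ ?_ ?_ ?_ h x
  · intro x y; exact map_add d x y
  · intro x y; simp [Derivation.leibniz]
  · intro x y; exact map_add e x y
  · intro x y; simp [Derivation.leibniz]
  · intro c; rw [Derivation.map_algebraMap, Derivation.map_algebraMap]

variable (D : Fin l → Derivation k (RF k l) (RF k l))

lemma comm_EF (hD : IsPartialDeriv D) (x : RF k l) :
    EE D (dsum D Finset.univ (fun s => zv s ^ 2) x)
      = dsum D Finset.univ (fun s => zv s ^ 2) (EE D x) + 2 * dsum D Finset.univ zv x := by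
  have h := der_ext ⁅EE D, dsum D Finset.univ (fun s => zv s ^ 2)⁆ ((2 : RF k l) • dsum D Finset.univ zv)
    (by
      intro s
      rw [Derivation.commutator_apply, Derivation.smul_apply]
      simp only [EE, dsum_zv D hD, Finset.mem_univ, if_true, pow_two, Derivation.leibniz,
        Derivation.map_one_eq_zero, smul_eq_mul]
      ring) x
  rw [Derivation.commutator_apply, Derivation.smul_apply, smul_eq_mul] at h
  rw [← h]; ring

lemma comm_EH (hD : IsPartialDeriv D) (x : RF k l) :
    dsum D Finset.univ zv (EE D x) = EE D (dsum D Finset.univ zv x) - EE D x := by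
  have h := der_ext ⁅dsum D Finset.univ zv, EE D⁆ (-EE D)
    (by
      intro s
      rw [Derivation.commutator_apply, Derivation.neg_apply]
      simp only [EE, dsum_zv D hD, Finset.mem_univ, if_true, 
        Derivation.map_one_eq_zero]
      ring) x
  rw [Derivation.commutator_apply, Derivation.neg_apply] at h
  linear_combination h

lemma comm_ED (hD : IsPartialDeriv D) (j : Fin l) (x : RF k l) : EE D (D j x) = D j (EE D x) := by
  have h := der_ext ⁅EE D, D j⁆ 0
    (by
      intro s
      rw [Derivation.commutator_apply]
      simp only [EE, dsum_zv D hD, Finset.mem_univ, if_true, hD j,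
        Derivation.map_one_eq_zero]
      split_ifs <;> simp) x
  rw [Derivation.commutator_apply] at h
  exact sub_eq_zero.1 h

lemma iter_add (hD : IsPartialDeriv D) (n : ℕ) (x y : RF k l) : (EE D)^[n] (x + y) = (EE D)^[n] x + (EE D)^[n] y := by
  induction n with
  | zero => rfl
  | succ n ih => rw [Function.iterate_succ_apply', ih, map_add, Function.iterate_succ_apply',
      Function.iterate_succ_apply']

lemma iter_zero (n m : ℕ) (h : n ≤ m) (x : RF k l) (hx : (EE D)^[n] x = 0) : (EE D)^[m] x = 0 := by
  obtain ⟨r, rfl⟩ := Nat.exists_eq_add_of_le h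
  clear h
  induction r with
  | zero => exact hx
  | succ r ih => rw [← add_assoc, Function.iterate_succ_apply', ih, map_zero]

lemma iter_mul_const (q : RF k l) (hq : EE D q = 0) (n : ℕ) (x : RF k l) :
    (EE D)^[n] (x * q) = (EE D)^[n] x * q := by
  induction n with
  | zero => rfl
  | succ n ih =>
    rw [Function.iterate_succ_apply', ih, Function.iterate_succ_apply', Derivation.leibniz, hq]
    simp [mul_comm]

lemma iter_mul_z (hD : IsPartialDeriv D) (s : Fin l) (n : ℕ) (x : RF k l) :
    (EE D)^[n+1] (x * zv s) = (EE D)^[n+1] x * zv s + ((n : RF k l) + 1) * (EE D)^[n] x := by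
  induction n with
  | zero =>
    simp [Derivation.leibniz, dsum_zv D hD]; ring
  | succ n ih =>
    rw [Function.iterate_succ_apply', ih, map_add, Derivation.leibniz, Derivation.leibniz,
      dsum_zv D hD, ← Function.iterate_succ_apply' (EE D), ← Function.iterate_succ_apply' (EE D)]
    have : EE D ((n : RF k l) + 1) = 0 := by
      have := (EE D).map_natCast (n + 1)
      simpa using this
    rw [this]
    simp; ring

lemma nil_poly (hD : IsPartialDeriv D) (p : MvPolynomial (Fin l) k) : ∃ n, (EE D)^[n] (algebraMap _ _ p) = 0 := by
  induction p using MvPolynomial.induction_on with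
  | C a => exact ⟨1, by rw [← kmap]; simp⟩
  | add p q hp hq =>
    obtain ⟨n, hn⟩ := hp
    obtain ⟨m, hm⟩ := hq
    refine ⟨max n m, ?_⟩
    rw [map_add, iter_add D hD, iter_zero D n _ (le_max_left _ _) _ hn,
      iter_zero D m _ (le_max_right _ _) _ hm, add_zero]
  | mul_X p s hp =>
    obtain ⟨n, hn⟩ := hp
    refine ⟨n + 1, ?_⟩
    have := iter_mul_z D hD s n (algebraMap _ _ p)
    rw [map_mul]
    change (EE D)^[n+1] (algebraMap _ _ p * zv s) = 0
    rw [this, hn, iter_zero D n (n+1) (by omega) _ hn]; simp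

lemma EE_zpow (hD : IsPartialDeriv D) (s t : Fin l) (e : ℤ) : EE D ((zv s - zv t) ^ e) = 0 := by
  have h0 : EE D (zv s - zv t) = 0 := by
    rw [map_sub, dsum_zv D hD, dsum_zv D hD]; simp
  have hn : ∀ n : ℕ, EE D ((zv s - zv t) ^ n) = 0 := by
    intro n; rw [Derivation.leibniz_pow, h0]; simp
  obtain ⟨n, rfl | rfl⟩ := e.eq_nat_or_neg
  · rw [zpow_natCast]; exact hn n
  · rw [zpow_neg, zpow_natCast, Derivation.leibniz_inv, hn]; simp

lemma EE_prod {ι : Type} (S : Finset ι) (f : ι → RF k l) (h : ∀ s ∈ S, EE D (f s) = 0) :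
    EE D (∏ s ∈ S, f s) = 0 := by
  induction S using Finset.induction_on with
  | empty => simp
  | insert a S ha ih =>
    rw [Finset.prod_insert ha, Derivation.leibniz, h a (by simp), ih (fun s hs => h s (by simp [hs]))]
    simp

lemma nil_Phi (hD : IsPartialDeriv D) (α : RF k l) (hα : α ∈ Phi k l) : ∃ n, (EE D)^[n] α = 0 := by
  obtain ⟨p, e, rfl⟩ := hα
  obtain ⟨n, hn⟩ := nil_poly D hD p
  refine ⟨n, ?_⟩
  rw [iter_mul_const, hn, zero_mul]
  apply EE_prod
  intro s _
  apply EE_prod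
  intro t _
  split_ifs
  · exact EE_zpow D hD _ _ _
  · simp

lemma EE_zero (hD : IsPartialDeriv D) [CharZero k] (α : RF k l) (hα : α ∈ Phi k l)
    (hH : dsum D Finset.univ zv α = -(2 * (l : RF k l)) * α)
    (hF : dsum D Finset.univ (fun s => zv s ^ 2) α + 4 * (∑ s, zv s) * α = 0) : EE D α = 0 := by
  have := charZero_RF (k := k) (l := l)
  have hHn : ∀ n : ℕ, dsum D Finset.univ zv ((EE D)^[n] α) = (-(2 * (l : RF k l)) - n) * (EE D)^[n] α := by
    intro n
    induction n with
    | zero => simpa using hH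
    | succ n ih =>
      have hc : EE D (-(2 * (l : RF k l)) - n) = 0 := by
        have := (EE D).map_intCast (-(2 * (l:ℤ)) - n)
        simpa using this
      rw [Function.iterate_succ_apply', comm_EH D hD, ih, Derivation.leibniz, hc]
      simp; ring
  have hFn : ∀ n : ℕ, dsum D Finset.univ (fun s => zv s ^ 2) ((EE D)^[n+1] α)
      + 4 * (∑ s, zv s) * (EE D)^[n+1] α = (n * (n + 1) : RF k l) * (EE D)^[n] α := by
    have step : ∀ (n : ℕ) (y : RF k l), dsum D Finset.univ (fun s => zv s ^ 2) ((EE D)^[n] α)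
      + 4 * (∑ s, zv s) * (EE D)^[n] α = y →
        dsum D Finset.univ (fun s => zv s ^ 2) ((EE D)^[n+1] α)
      + 4 * (∑ s, zv s) * (EE D)^[n+1] α = EE D y + 2 * (n : RF k l) * (EE D)^[n] α := by
      intro n y hy
      have h1 := comm_EF D hD ((EE D)^[n] α)
      rw [hHn] at h1
      have h4 : EE D (4 : RF k l) = 0 := by
        have := (EE D).map_natCast 4
        simpa using this
      have hs : EE D (∑ s, zv s) = (l : RF k l) := by
        rw [map_sum]
        simp [dsum_zv D hD]
      rw [Function.iterate_succ_apply', ← hy, map_add, h1, Derivation.leibniz, Derivation.leibniz, h4, hs]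
      simp only [smul_eq_mul]
      ring
    intro n
    induction n with
    | zero => rw [step 0 0 hF]; simp
    | succ n ih =>
      have hc : EE D ((n : RF k l) * (n + 1)) = 0 := by
        have := (EE D).map_natCast (n * (n + 1))
        simp
      rw [step (n+1) _ ih, Derivation.leibniz, hc, ← Function.iterate_succ_apply' (EE D)]
      push_cast
      simp only [smul_eq_mul]
      ring
  obtain ⟨n, hn⟩ := nil_Phi D hD α hα
  have key : ∀ n : ℕ, (EE D)^[n+1] α = 0 → (EE D)^[1] α = 0 := by
    intro n
    induction n with
    | zero => exact fun h => h
    | succ n ih =>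
      intro h
      apply ih
      have := hFn (n+1)
      rw [h] at this
      simp only [map_zero, mul_zero, add_zero] at this
      rcases mul_eq_zero.1 this.symm with h' | h'
      · exfalso
        have h'' : (((n + 1) * (n + 1 + 1) : ℕ) : RF k l) = 0 := by push_cast; push_cast at h'; exact h'
        rw [Nat.cast_eq_zero] at h''
        simp at h''
      · exact h'
  exact key n (iter_zero D n (n+1) (by omega) _ hn)

end Trans

section PhiSub
variable {l : ℕ}

/-- subring generated by variables in `S` and inverse differences allowed by `G` -/
def PG (k : Type) [Field k] {l : ℕ} (S : Finset (Fin l)) (G : Fin l → Fin l → Prop) :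
    Subring (RF k l) :=
  Subring.closure (Set.range (algebraMap k (RF k l)) ∪ {x | ∃ s ∈ S, x = zv s} ∪
    {x | ∃ s ∈ S, ∃ t ∈ S, G s t ∧ x = (zv s - zv t)⁻¹})

/-- all inverse differences -/
def PS (k : Type) [Field k] {l : ℕ} (S : Finset (Fin l)) : Subring (RF k l) := PG k S (fun _ _ => True)

/-- all inverse differences but the one of `i, j` -/
def PB (k : Type) [Field k] {l : ℕ} (S : Finset (Fin l)) (i j : Fin l) : Subring (RF k l) :=
  PG k S (fun s t => ¬(s = i ∧ t = j) ∧ ¬(s = j ∧ t = i))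

lemma PG_const (S : Finset (Fin l)) (G : Fin l → Fin l → Prop) (c : k) :
    algebraMap k (RF k l) c ∈ PG k S G :=
  Subring.subset_closure (Or.inl (Or.inl ⟨c, rfl⟩))

lemma PG_zv (S : Finset (Fin l)) (G : Fin l → Fin l → Prop) (s : Fin l) (hs : s ∈ S) :
    zv s ∈ PG k S G :=
  Subring.subset_closure (Or.inl (Or.inr ⟨s, hs, rfl⟩))

lemma PG_inv (S : Finset (Fin l)) (G : Fin l → Fin l → Prop) (s t : Fin l) (hs : s ∈ S) (ht : t ∈ S)
    (hG : G s t) : (zv s - zv t)⁻¹ ∈ PG k S G :=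
  Subring.subset_closure (Or.inr ⟨s, hs, t, ht, hG, rfl⟩)

lemma PG_ind {S : Finset (Fin l)} {G : Fin l → Fin l → Prop} (P : RF k l → Prop)
    (hc : ∀ c : k, P (algebraMap k _ c)) (hz : ∀ s ∈ S, P (zv s))
    (hi : ∀ s ∈ S, ∀ t ∈ S, G s t → P ((zv s - zv t)⁻¹))
    (hadd : ∀ x y, x ∈ PG k S G → y ∈ PG k S G → P x → P y → P (x + y))
    (hmul : ∀ x y, x ∈ PG k S G → y ∈ PG k S G → P x → P y → P (x * y))
    (x : RF k l) (hx : x ∈ PG k S G) : P x := by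
  induction hx using Subring.closure_induction with
  | mem x hx =>
    rcases hx with (⟨c, rfl⟩ | ⟨s, hs, rfl⟩) | ⟨s, hs, t, ht, hG, rfl⟩
    · exact hc c
    · exact hz s hs
    · exact hi s hs t ht hG
  | zero => simpa using hc 0
  | one => simpa using hc 1
  | add x y hx hy px py => exact hadd x y hx hy px py
  | mul x y hx hy px py => exact hmul x y hx hy px py
  | neg x hx px =>
    have h1 : (-1 : RF k l) ∈ PG k S G := neg_mem (one_mem _)
    have := hmul (-1) x h1 hx (by simpa using hc (-1)) px
    simpa using this

lemma PG_mono {S T : Finset (Fin l)} {G H : Fin l → Fin l → Prop} (hST : S ⊆ T)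
    (hGH : ∀ s t, G s t → H s t) : PG k S G ≤ PG k T H := by
  intro x hx
  exact PG_ind (fun x => x ∈ PG k T H) (fun c => PG_const _ _ c) (fun s hs => PG_zv _ _ s (hST hs))
    (fun s hs t ht h => PG_inv _ _ s t (hST hs) (hST ht) (hGH _ _ h))
    (fun x y _ _ h1 h2 => add_mem h1 h2) (fun x y _ _ h1 h2 => mul_mem h1 h2) x hx

lemma PS_depends (S : Finset (Fin l)) (x : RF k l) (hx : x ∈ PS k S) : dependsOnlyOn S x := by
  unfold dependsOnlyOn
  have hz : ∀ s ∈ S, (zv s : RF k l) ∈ Subfield.closure (Set.range (algebraMap k (RF k l)) ∪ {x | ∃ i ∈ S, x = zv i}) :=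
    fun s hs => Subfield.subset_closure (Or.inr ⟨s, hs, rfl⟩)
  exact PG_ind (fun x => x ∈ Subfield.closure (Set.range (algebraMap k (RF k l)) ∪ {x | ∃ i ∈ S, x = zv i}))
    (fun c => Subfield.subset_closure (Or.inl ⟨c, rfl⟩)) hz
    (fun s hs t ht _ => inv_mem (sub_mem (hz s hs) (hz t ht)))
    (fun x y _ _ h1 h2 => add_mem h1 h2) (fun x y _ _ h1 h2 => mul_mem h1 h2) x hx

/-- Vandermonde polynomial -/
def vdm (k : Type) [Field k] (l : ℕ) : MvPolynomial (Fin l) k :=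
  ∏ i : Fin l, ∏ j : Fin l, (if i < j then (X i - X j) else 1)

lemma vdm_dvd (s t : Fin l) (h : s < t) : ((X s - X t : MvPolynomial (Fin l) k)) ∣ vdm k l := by
  unfold vdm
  refine dvd_trans ?_ (Finset.dvd_prod_of_mem _ (Finset.mem_univ s))
  refine dvd_trans ?_ (Finset.dvd_prod_of_mem _ (Finset.mem_univ t))
  rw [if_pos h]

lemma vdm_inv (s t : Fin l) : ∃ p : MvPolynomial (Fin l) k, (zv s - zv t : RF k l)⁻¹ * algebraMap _ (RF k l) (vdm k l) = algebraMap _ (RF k l) p := by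
  have key : ∀ s t : Fin l, s < t → ∃ p : MvPolynomial (Fin l) k, (zv s - zv t : RF k l)⁻¹ * algebraMap _ (RF k l) (vdm k l) = algebraMap _ (RF k l) p := by
    intro s t h
    obtain ⟨p, hp⟩ := vdm_dvd (k := k) s t h
    refine ⟨p, ?_⟩
    rw [hp, map_mul, map_sub]
    exact inv_mul_cancel_left₀ (zv_sub_ne_zero (ne_of_lt h)) _
  rcases lt_trichotomy s t with h | h | h
  · exact key s t h
  · subst h; exact ⟨0, by simp⟩
  · obtain ⟨p, hp⟩ := key t s h
    refine ⟨-p, ?_⟩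
    rw [map_neg, ← hp, ← neg_sub (zv t), inv_neg, neg_mul]

lemma PS_Phi (S : Finset (Fin l)) (x : RF k l) (hx : x ∈ PS k S) : x ∈ Phi k l := by
  have h : ∃ (N : ℕ) (p : MvPolynomial (Fin l) k), x * (algebraMap _ (RF k l) (vdm k l)) ^ N = algebraMap _ _ p := by
    refine PG_ind (fun x => ∃ (N : ℕ) (p : MvPolynomial (Fin l) k), x * (algebraMap _ (RF k l) (vdm k l)) ^ N = algebraMap _ _ p)
      ?_ ?_ ?_ ?_ ?_ x hx
    · intro c; exact ⟨0, MvPolynomial.C c, by rw [kmap]; simp⟩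
    · intro s _; exact ⟨0, X s, by simp [zv]⟩
    · intro s _ t _ _
      obtain ⟨p, hp⟩ := vdm_inv (k := k) s t
      exact ⟨1, p, by rw [pow_one, hp]⟩
    · rintro x y _ _ ⟨N, p, hp⟩ ⟨M, q, hq⟩
      refine ⟨N + M, p * vdm k l ^ M + q * vdm k l ^ N, ?_⟩
      rw [map_add, map_mul, map_mul, map_pow, map_pow, ← hp, ← hq]; ring
    · rintro x y _ _ ⟨N, p, hp⟩ ⟨M, q, hq⟩
      refine ⟨N + M, p * q, ?_⟩
      rw [map_mul, ← hp, ← hq]; ring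
  obtain ⟨N, p, hp⟩ := h
  refine ⟨p, fun _ _ => -(N : ℤ), ?_⟩
  have hv : (∏ i : Fin l, ∏ j : Fin l, (if i < j then (zv i - zv j : RF k l) ^ (-(N : ℤ)) else 1))
      = (algebraMap _ (RF k l) (vdm k l)) ^ (-(N:ℤ)) := by
    rw [vdm, map_prod, ← Finset.prod_zpow]
    refine Finset.prod_congr rfl fun i _ => ?_
    rw [map_prod, ← Finset.prod_zpow]
    refine Finset.prod_congr rfl fun j _ => ?_
    split_ifs
    · rw [map_sub]; rfl
    · simp
  have hv0 : algebraMap _ (RF k l) (vdm k l) ≠ 0 := by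
    rw [vdm, map_prod]
    refine Finset.prod_ne_zero_iff.2 fun i _ => ?_
    rw [map_prod]
    refine Finset.prod_ne_zero_iff.2 fun j _ => ?_
    split_ifs with h
    · rw [map_sub]; exact zv_sub_ne_zero (ne_of_lt h)
    · simp
  rw [hv, ← hp, zpow_neg, zpow_natCast, mul_assoc, mul_inv_cancel₀ (pow_ne_zero _ hv0), mul_one]

lemma Phi_PS (x : RF k l) (hx : x ∈ Phi k l) : x ∈ PS k Finset.univ := by
  obtain ⟨p, e, rfl⟩ := hx
  refine mul_mem ?_ (prod_mem fun i _ => prod_mem fun j _ => ?_)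
  · induction p using MvPolynomial.induction_on with
    | C a => rw [← kmap]; exact PG_const _ _ a
    | add p q hp hq => rw [map_add]; exact add_mem hp hq
    | mul_X p s hp => rw [map_mul]; exact mul_mem hp (PG_zv _ _ s (Finset.mem_univ s))
  · split_ifs
    · obtain ⟨n, h | h⟩ := (e i j).eq_nat_or_neg
      · rw [h, zpow_natCast]
        exact pow_mem (sub_mem (PG_zv _ _ _ (Finset.mem_univ _)) (PG_zv _ _ _ (Finset.mem_univ _))) _
      · rw [h, zpow_neg, zpow_natCast, ← inv_pow]
        exact pow_mem (PG_inv _ _ _ _ (Finset.mem_univ _) (Finset.mem_univ _) trivial) _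
    · exact one_mem _

lemma clear_pole (S : Finset (Fin l)) (i j : Fin l) (hi : i ∈ S) (hj : j ∈ S) (hij : i ≠ j)
    (x : RF k l) (hx : x ∈ PS k S) : ∃ N : ℕ, x * (zv i - zv j) ^ N ∈ PB k S i j := by
  have hp : ∀ N : ℕ, (zv i - zv j : RF k l) ^ N ∈ PB k S i j :=
    fun N => pow_mem (sub_mem (PG_zv _ _ _ hi) (PG_zv _ _ _ hj)) N
  refine PG_ind (fun x => ∃ N : ℕ, x * (zv i - zv j) ^ N ∈ PB k S i j) ?_ ?_ ?_ ?_ ?_ x hx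
  · intro c; exact ⟨0, by rw [pow_zero, mul_one]; exact PG_const _ _ c⟩
  · intro s hs; exact ⟨0, by rw [pow_zero, mul_one]; exact PG_zv _ _ s hs⟩
  · intro s hs t ht _
    by_cases h1 : s = i ∧ t = j
    · refine ⟨1, ?_⟩
      rw [h1.1, h1.2, pow_one, inv_mul_cancel₀ (zv_sub_ne_zero hij)]
      exact one_mem _
    by_cases h2 : s = j ∧ t = i
    · refine ⟨1, ?_⟩
      rw [h2.1, h2.2, pow_one, ← neg_sub (zv i : RF k l), inv_neg, neg_mul, inv_mul_cancel₀ (zv_sub_ne_zero hij)]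
      exact neg_mem (one_mem _)
    exact ⟨0, by rw [pow_zero, mul_one]; exact PG_inv _ _ s t hs ht ⟨h1, h2⟩⟩
  · rintro x y _ _ ⟨N, hN⟩ ⟨M, hM⟩
    refine ⟨N + M, ?_⟩
    have : (x + y) * (zv i - zv j) ^ (N + M) = x * (zv i - zv j) ^ N * (zv i - zv j) ^ M
      + y * (zv i - zv j) ^ M * (zv i - zv j) ^ N := by ring
    rw [this]
    exact add_mem (mul_mem hN (hp _)) (mul_mem hM (hp _))
  · rintro x y _ _ ⟨N, hN⟩ ⟨M, hM⟩
    refine ⟨N + M, ?_⟩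
    have : (x * y) * (zv i - zv j) ^ (N + M) = (x * (zv i - zv j) ^ N) * (y * (zv i - zv j) ^ M) := by ring
    rw [this]
    exact mul_mem hN hM

lemma PS_erase_PB (S : Finset (Fin l)) (i j : Fin l) : PS k (S.erase i) ≤ PB k S i j := by
  intro x hx
  refine PG_ind (fun x => x ∈ PB k S i j) (fun c => PG_const _ _ c)
    (fun s hs => PG_zv _ _ s (Finset.mem_of_mem_erase hs)) ?_
    (fun x y _ _ h1 h2 => add_mem h1 h2) (fun x y _ _ h1 h2 => mul_mem h1 h2) x hx
  intro s hs t ht _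
  refine PG_inv _ _ s t (Finset.mem_of_mem_erase hs) (Finset.mem_of_mem_erase ht) ⟨?_, ?_⟩
  · rintro ⟨h, _⟩; exact Finset.ne_of_mem_erase hs h
  · rintro ⟨_, h⟩; exact Finset.ne_of_mem_erase ht h

lemma taylor1 (S : Finset (Fin l)) (i j : Fin l) (hi : i ∈ S) (hj : j ∈ S) (hij : i ≠ j)
    (x : RF k l) (hx : x ∈ PB k S i j) :
    ∃ c ∈ PS k (S.erase i), ∃ y ∈ PB k S i j, x = c + (zv i - zv j) * y := by
  have hje : j ∈ S.erase i := Finset.mem_erase.2 ⟨hij.symm, hj⟩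
  have hxm : (zv i - zv j : RF k l) ∈ PB k S i j := sub_mem (PG_zv _ _ _ hi) (PG_zv _ _ _ hj)
  have hinv : ∀ t ∈ S, t ≠ i → t ≠ j → ∃ c ∈ PS k (S.erase i), ∃ y ∈ PB k S i j,
      (zv i - zv t : RF k l)⁻¹ = c + (zv i - zv j) * y := by
    intro t ht hti htj
    have h1 : (zv j - zv t : RF k l)⁻¹ ∈ PS k (S.erase i) :=
      PG_inv _ _ _ _ hje (Finset.mem_erase.2 ⟨hti, ht⟩) trivial
    refine ⟨(zv j - zv t)⁻¹, h1, -((zv j - zv t)⁻¹ * (zv i - zv t)⁻¹),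
      neg_mem (mul_mem (PS_erase_PB _ _ _ h1) (PG_inv _ _ _ _ hi ht ⟨fun h => htj h.2, fun h => hti h.2⟩)), ?_⟩
    have h2 : (zv j - zv t : RF k l) ≠ 0 := zv_sub_ne_zero htj.symm
    have h3 : (zv i - zv t : RF k l) ≠ 0 := zv_sub_ne_zero hti.symm
    field_simp
    ring
  refine PG_ind (fun x => ∃ c ∈ PS k (S.erase i), ∃ y ∈ PB k S i j, x = c + (zv i - zv j) * y) ?_ ?_ ?_ ?_ ?_ x hx
  · intro c; exact ⟨_, PG_const _ _ c, 0, zero_mem _, by simp⟩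
  · intro s hs
    by_cases h : s = i
    · subst h
      exact ⟨zv j, PG_zv _ _ _ hje, 1, one_mem _, by ring⟩
    · exact ⟨zv s, PG_zv _ _ _ (Finset.mem_erase.2 ⟨h, hs⟩), 0, zero_mem _, by simp⟩
  · intro s hs t ht hG
    by_cases hst : s = t
    · subst hst; exact ⟨0, zero_mem _, 0, zero_mem _, by simp⟩
    by_cases h : s = i
    · subst h
      exact hinv t ht (fun h => hst h.symm) (fun h => hG.1 ⟨rfl, h⟩)
    by_cases h' : t = i
    · subst h'
      obtain ⟨c, hc, y, hy, e⟩ := hinv s hs hst (fun h => hG.2 ⟨h, rfl⟩)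
      refine ⟨-c, neg_mem hc, -y, neg_mem hy, ?_⟩
      rw [← neg_sub (zv t : RF k l), inv_neg, e]; ring
    · exact ⟨_, PG_inv _ _ _ _ (Finset.mem_erase.2 ⟨h, hs⟩) (Finset.mem_erase.2 ⟨h', ht⟩) trivial, 0,
        zero_mem _, by simp⟩
  · rintro _ _ _ _ ⟨c, hc, y, hy, rfl⟩ ⟨d, hd, w, hw, rfl⟩
    exact ⟨c + d, add_mem hc hd, y + w, add_mem hy hw, by ring⟩
  · rintro _ _ _ _ ⟨c, hc, y, hy, rfl⟩ ⟨d, hd, w, hw, rfl⟩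
    refine ⟨c * d, mul_mem hc hd, c * w + y * d + (zv i - zv j) * y * w, ?_, by ring⟩
    have hc' := PS_erase_PB S i j hc
    have hd' := PS_erase_PB S i j hd
    exact add_mem (add_mem (mul_mem hc' hw) (mul_mem hy hd')) (mul_mem (mul_mem hxm hy) hw)

lemma taylorK (S : Finset (Fin l)) (i j : Fin l) (hi : i ∈ S) (hj : j ∈ S) (hij : i ≠ j)
    (x : RF k l) (hx : x ∈ PB k S i j) (K : ℕ) :
    ∃ c : ℕ → RF k l, (∀ n, c n ∈ PS k (S.erase i)) ∧ ∃ y ∈ PB k S i j,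
      x = ∑ n ∈ Finset.range K, c n * (zv i - zv j) ^ n + (zv i - zv j) ^ K * y := by
  induction K with
  | zero => exact ⟨fun _ => 0, fun _ => zero_mem _, x, hx, by simp⟩
  | succ K ih =>
    obtain ⟨c, hc, y, hy, e⟩ := ih
    obtain ⟨d, hd, w, hw, e'⟩ := taylor1 S i j hi hj hij y hy
    refine ⟨Function.update c K d, ?_, w, hw, ?_⟩
    · intro n
      by_cases h : n = K
      · subst h; simpa using hd
      · simpa [Function.update_of_ne h] using hc n
    · rw [Finset.sum_range_succ, Function.update_self, e, e']
      have : ∑ n ∈ Finset.range K, c n * (zv i - zv j) ^ n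
          = ∑ n ∈ Finset.range K, Function.update c K d n * (zv i - zv j) ^ n := by
        refine Finset.sum_congr rfl fun n hn => ?_
        rw [Function.update_of_ne (by have := Finset.mem_range.1 hn; omega)]
      rw [this]; ring

lemma laurent_decomp (S : Finset (Fin l)) (i j : Fin l) (hi : i ∈ S) (hj : j ∈ S) (hij : i ≠ j)
    (x : RF k l) (hx : x ∈ PS k S) (m : ℤ) :
    ∃ (K : ℕ) (e : ℕ → ℤ) (c : ℕ → RF k l) (E : ℤ) (y : RF k l), (∀ n, c n ∈ PS k (S.erase i)) ∧
      y ∈ PB k S i j ∧ m < E ∧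
      x = ∑ n ∈ Finset.range K, c n * (zv i - zv j) ^ e n + (zv i - zv j) ^ E * y := by
  obtain ⟨N, hN⟩ := clear_pole S i j hi hj hij x hx
  have hz : (zv i - zv j : RF k l) ≠ 0 := zv_sub_ne_zero hij
  obtain ⟨c, hc, y, hy, e⟩ := taylorK S i j hi hj hij _ hN (m + N + 1).toNat
  refine ⟨(m + N + 1).toNat, fun n => (n : ℤ) - N, c, ((m + N + 1).toNat : ℤ) - N, y, hc, hy, by omega, ?_⟩
  have hxe : x = (x * (zv i - zv j) ^ N) * ((zv i - zv j) ^ N)⁻¹ := by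
    rw [mul_assoc, mul_inv_cancel₀ (pow_ne_zero _ hz), mul_one]
  rw [hxe, e, add_mul, Finset.sum_mul]
  congr 1
  · refine Finset.sum_congr rfl fun n _ => ?_
    rw [zpow_sub₀ hz, zpow_natCast, zpow_natCast]; ring
  · rw [zpow_sub₀ hz, zpow_natCast, zpow_natCast]; ring

end PhiSub

section Comm
variable {l : ℕ}

lemma single_zp (a : ℤ) (r : RF k l) (hr : r ≠ 0) (e : ℤ) :
    (HahnSeries.single a r : LaurentSeries (RF k l)) ^ e = HahnSeries.single (e * a) (r ^ e) := by
  obtain ⟨n, h | h⟩ := e.eq_nat_or_neg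
  · rw [h, zpow_natCast, zpow_natCast, HahnSeries.single_pow, nsmul_eq_mul]
  · rw [h, zpow_neg, zpow_neg, zpow_natCast, zpow_natCast, HahnSeries.single_pow, HahnSeries.inv_single,
      nsmul_eq_mul, neg_mul]

/-- functions regular along `z_i = z_j` -/
def Vreg (i j : Fin l) : Subring (RF k l) :=
  ((HahnSeries.ofPowerSeries ℤ (RF k l)).range).comap (SP i j)

lemma Vreg_coeff (i j : Fin l) (y : RF k l) (hy : y ∈ Vreg i j) (n : ℤ) (hn : n < 0) :
    (SP i j y).coeff n = 0 := by
  obtain ⟨f, hf⟩ := hy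
  rw [← hf]
  have := PowerSeries.coeff_coe f n
  rw [if_pos hn] at this
  exact this

lemma Vreg_lin (i j : Fin l) (y a b : RF k l) (h : SP i j y = HahnSeries.C a + HahnSeries.single 1 b) :
    y ∈ Vreg i j ∧ (a ≠ 0 → y⁻¹ ∈ Vreg i j) := by
  have h1 : HahnSeries.ofPowerSeries ℤ (RF k l) (PowerSeries.C a + PowerSeries.C b * PowerSeries.X) = SP i j y := by
    rw [map_add, map_mul, HahnSeries.ofPowerSeries_C, HahnSeries.ofPowerSeries_C, HahnSeries.ofPowerSeries_X, h,
      HahnSeries.C_apply b, HahnSeries.single_mul_single]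
    simp
  refine ⟨⟨_, h1⟩, fun ha => ⟨(PowerSeries.C a + PowerSeries.C b * PowerSeries.X)⁻¹, ?_⟩⟩
  rw [map_inv₀, ← h1]
  refine eq_inv_of_mul_eq_one_right ?_
  rw [← map_mul, PowerSeries.mul_inv_cancel, map_one]
  simpa using ha

lemma Vreg_C (i j : Fin l) (y a : RF k l) (h : SP i j y = HahnSeries.C a) :
    y ∈ Vreg i j ∧ (a ≠ 0 → y⁻¹ ∈ Vreg i j) :=
  Vreg_lin i j y a 0 (by rw [h]; simp)

lemma Vreg_zv (i j s : Fin l) : (zv s : RF k l) ∈ Vreg i j ∧ (zv s : RF k l)⁻¹ ∈ Vreg i j := by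
  by_cases h : s = i
  · subst h
    have := Vreg_lin s j (zv s : RF k l) _ _ (SP_zv_self s j)
    exact ⟨this.1, this.2 (zv_ne_zero _)⟩
  · have := Vreg_C i j (zv s : RF k l) _ (SP_zv_ne i j s h)
    exact ⟨this.1, this.2 (zv_ne_zero _)⟩

lemma Vreg_inv (i j s t : Fin l) (h1 : ¬(s = i ∧ t = j)) (h2 : ¬(s = j ∧ t = i)) :
    (zv s - zv t : RF k l)⁻¹ ∈ Vreg i j := by
  by_cases hst : s = t
  · subst hst; rw [sub_self, inv_zero]; exact zero_mem _
  by_cases hs : s = i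
  · subst hs
    refine (Vreg_lin s j (zv s - zv t : RF k l) (zv j - zv t) 1 ?_).2 (zv_sub_ne_zero fun h => h1 ⟨rfl, h.symm⟩)
    rw [map_sub, SP_zv_self, SP_zv_ne _ _ _ (Ne.symm hst), map_sub]; ring
  by_cases ht : t = i
  · subst ht
    refine (Vreg_lin t j (zv s - zv t : RF k l) (zv s - zv j) (-1) ?_).2 (zv_sub_ne_zero fun h => h2 ⟨h, rfl⟩)
    rw [map_sub, SP_zv_self, SP_zv_ne _ _ _ hst, map_sub, HahnSeries.single_neg]; ring
  · refine (Vreg_C i j (zv s - zv t : RF k l) (zv s - zv t) ?_).2 (zv_sub_ne_zero hst)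
    rw [map_sub, SP_zv_ne _ _ _ hs, SP_zv_ne _ _ _ ht, map_sub]

lemma Vreg_const (i j : Fin l) (c : k) : algebraMap k (RF k l) c ∈ Vreg i j :=
  (Vreg_C i j _ _ (SP_const i j c)).1

lemma PB_Vreg (S : Finset (Fin l)) (i j : Fin l) (y : RF k l) (hy : y ∈ PB k S i j) : y ∈ Vreg i j :=
  PG_ind (fun y => y ∈ Vreg i j) (fun c => Vreg_const i j c) (fun s _ => (Vreg_zv i j s).1)
    (fun s _ t _ h => Vreg_inv i j s t h.1 h.2)
    (fun x y _ _ h1 h2 => add_mem h1 h2) (fun x y _ _ h1 h2 => mul_mem h1 h2) y hy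

/-- functions not involving `z_i` -/
def Vfix (i j : Fin l) : Subring (RF k l) := RingHom.eqLocus (SP i j) HahnSeries.C

lemma Vfix_iff (i j : Fin l) (y : RF k l) : y ∈ Vfix i j ↔ SP i j y = HahnSeries.C y := Iff.rfl

lemma Vfix_inv (i j : Fin l) (y : RF k l) (h : y ∈ Vfix i j) : y⁻¹ ∈ Vfix i j := by
  rw [Vfix_iff] at *
  rw [map_inv₀, map_inv₀, h]

lemma Vfix_zv (i j s : Fin l) (h : s ≠ i) : (zv s : RF k l) ∈ Vfix i j := SP_zv_ne i j s h

lemma PS_fix (S : Finset (Fin l)) (i j : Fin l) (y : RF k l) (hy : y ∈ PS k (S.erase i)) :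
    y ∈ Vfix i j :=
  PG_ind (fun y => y ∈ Vfix i j) (fun c => SP_const i j c)
    (fun s hs => Vfix_zv i j s (Finset.ne_of_mem_erase hs))
    (fun s hs t ht _ => Vfix_inv _ _ _ (sub_mem (Vfix_zv i j s (Finset.ne_of_mem_erase hs))
      (Vfix_zv i j t (Finset.ne_of_mem_erase ht))))
    (fun x y _ _ h1 h2 => add_mem h1 h2) (fun x y _ _ h1 h2 => mul_mem h1 h2) y hy

lemma SC_coeff_mem (V : Subring (RF k l)) {S : Finset (Fin l)} {G : Fin l → Fin l → Prop}
    (hc : ∀ c : k, algebraMap k (RF k l) c ∈ V) (hz : ∀ s ∈ S, (zv s : RF k l) ∈ V)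
    (hzi : ∀ s ∈ S, (zv s : RF k l)⁻¹ ∈ V)
    (hi : ∀ s ∈ S, ∀ t ∈ S, G s t → (zv s - zv t : RF k l)⁻¹ ∈ V)
    (J : Finset (Fin l)) (y : RF k l) (hy : y ∈ PG k S G) : ∀ m, (SC J y).coeff m ∈ V := by
  have hsing : ∀ (a : ℤ) (r : RF k l), r ∈ V → ∀ m, (HahnSeries.single a r).coeff m ∈ V := by
    intro a r hr m
    rw [HahnSeries.coeff_single]
    split_ifs
    · exact hr
    · exact zero_mem _
  have hlin : ∀ a b : RF k l, a ≠ 0 → a⁻¹ ∈ V → b ∈ V → ∀ m,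
      ((HahnSeries.C a + HahnSeries.single (1:ℤ) b)⁻¹).coeff m ∈ V := by
    intro a b ha h1 h2 m
    rw [inv_lin a b ha]
    split_ifs
    · exact zero_mem _
    · exact mul_mem (pow_mem (neg_mem h2) _) (pow_mem h1 _)
  refine PG_ind (fun y => ∀ m, (SC J y).coeff m ∈ V) ?_ ?_ ?_ ?_ ?_ y hy
  · intro c; rw [SC_const]; exact hsing _ _ (hc c)
  · intro s hs
    by_cases h : s ∈ J
    · rw [SC_zv_mem J s h]; exact hsing _ _ (hz s hs)
    · rw [SC_zv_not J s h]; exact hsing _ _ (hz s hs)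
  · intro s hs t ht hG
    rw [map_inv₀, map_sub]
    by_cases h : s ∈ J <;> by_cases h' : t ∈ J
    · rw [SC_zv_mem J s h, SC_zv_mem J t h', ← HahnSeries.single_sub, HahnSeries.inv_single]
      exact hsing _ _ (hi s hs t ht hG)
    · rw [SC_zv_mem J s h, SC_zv_not J t h']
      have : (HahnSeries.single (1:ℤ) (zv s) - HahnSeries.C (zv t) : LaurentSeries (RF k l))
        = HahnSeries.C (-zv t) + HahnSeries.single 1 (zv s) := by rw [map_neg]; ring
      rw [this]
      exact hlin _ _ (neg_ne_zero.2 (zv_ne_zero t)) (by rw [inv_neg]; exact neg_mem (hzi t ht)) (hz s hs)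
    · rw [SC_zv_not J s h, SC_zv_mem J t h', sub_eq_add_neg, ← HahnSeries.single_neg]
      exact hlin _ _ (zv_ne_zero s) (hzi s hs) (neg_mem (hz t ht))
    · rw [SC_zv_not J s h, SC_zv_not J t h', ← map_sub, ← map_inv₀]
      exact hsing _ _ (hi s hs t ht hG)
  · intro x y _ _ h1 h2 m
    rw [map_add, HahnSeries.coeff_add]
    exact add_mem (h1 m) (h2 m)
  · intro x y _ _ h1 h2 m
    rw [map_mul, HahnSeries.coeff_mul]
    exact sum_mem fun p _ => mul_mem (h1 _) (h2 _)

lemma SC_congr {S : Finset (Fin l)} {G : Fin l → Fin l → Prop} (J J' : Finset (Fin l))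
    (h : ∀ s ∈ S, s ∈ J ↔ s ∈ J') (y : RF k l) (hy : y ∈ PG k S G) : SC J y = SC J' y := by
  have hz : ∀ s ∈ S, SC J (zv s : RF k l) = SC J' (zv s) := by
    intro s hs
    by_cases h1 : s ∈ J
    · rw [SC_zv_mem J s h1, SC_zv_mem J' s ((h s hs).1 h1)]
    · rw [SC_zv_not J s h1, SC_zv_not J' s (fun h2 => h1 ((h s hs).2 h2))]
  refine PG_ind (fun y => SC J y = SC J' y) (fun c => by rw [SC_const, SC_const]) hz ?_ ?_ ?_ y hy
  · intro s hs t ht _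
    rw [map_inv₀, map_inv₀, map_sub, map_sub, hz s hs, hz t ht]
  · intro x y _ _ h1 h2; rw [map_add, map_add, h1, h2]
  · intro x y _ _ h1 h2; rw [map_mul, map_mul, h1, h2]

lemma SP_x (i j : Fin l) (hij : i ≠ j) : SP i j (zv i - zv j : RF k l) = HahnSeries.single 1 1 := by
  rw [map_sub, SP_zv_self, SP_zv_ne _ _ _ hij.symm]; ring

lemma SP_xe (i j : Fin l) (hij : i ≠ j) (e : ℤ) :
    SP i j ((zv i - zv j : RF k l) ^ e) = HahnSeries.single e 1 := by
  rw [map_zpow₀, SP_x i j hij, single_zp _ _ one_ne_zero]; simp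

lemma SC_xe (i j : Fin l) (hij : i ≠ j) (J : Finset (Fin l)) (hJ : i ∈ J ↔ j ∈ J) (e : ℤ) :
    SC J ((zv i - zv j : RF k l) ^ e) = HahnSeries.single (if j ∈ J then e else 0) ((zv i - zv j) ^ e) := by
  rw [map_zpow₀, map_sub]
  by_cases h : j ∈ J
  · rw [SC_zv_mem J j h, SC_zv_mem J i (hJ.2 h), ← HahnSeries.single_sub, single_zp _ _ (zv_sub_ne_zero hij),
      if_pos h, mul_one]
  · rw [SC_zv_not J j h, SC_zv_not J i (fun h' => h (hJ.1 h')), ← map_sub, HahnSeries.C_apply,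
      single_zp _ _ (zv_sub_ne_zero hij), if_neg h, mul_zero]

lemma rho_PS (S : Finset (Fin l)) (i j : Fin l) (hi : i ∈ S) (hj : j ∈ S) (hij : i ≠ j)
    (x : RF k l) (hx : x ∈ PS k S) (m : ℤ) : (SP i j x).coeff m ∈ PS k (S.erase i) := by
  obtain ⟨K, e, c, E, y, hc, hy, hm, rfl⟩ := laurent_decomp S i j hi hj hij x hx m
  rw [map_add, HahnSeries.coeff_add]
  refine add_mem ?_ ?_
  · rw [map_sum, HahnSeries.coeff_sum]
    refine sum_mem fun n _ => ?_
    rw [map_mul, SP_xe i j hij, (Vfix_iff _ _ _).1 (PS_fix S i j _ (hc n)), HahnSeries.C_apply,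
      HahnSeries.single_mul_single, HahnSeries.coeff_single]
    split_ifs
    · rw [mul_one]; exact hc n
    · exact zero_mem _
  · rw [map_mul, SP_xe i j hij, HahnSeries.coeff_single_mul,
      Vreg_coeff i j y (PB_Vreg S i j y hy) _ (by omega), mul_zero]
    exact zero_mem _

lemma commute_SC (i j : Fin l) (hij : i ≠ j) (J : Finset (Fin l)) (hJ : i ∈ J ↔ j ∈ J)
    (x : RF k l) (hx : x ∈ PS k Finset.univ) (m n : ℤ) :
    (SP i j ((SC J x).coeff m)).coeff n
      = (SC (J.erase i) ((SP i j x).coeff n)).coeff (m - if j ∈ J then n else 0) := by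
  obtain ⟨K, e, c, E, y, hc, hy, hm, rfl⟩ :=
    laurent_decomp Finset.univ i j (Finset.mem_univ i) (Finset.mem_univ j) hij x hx n
  have hadd : ∀ x y : RF k l, (SP i j ((SC J x).coeff m)).coeff n
      = (SC (J.erase i) ((SP i j x).coeff n)).coeff (m - if j ∈ J then n else 0) →
      (SP i j ((SC J y).coeff m)).coeff n
      = (SC (J.erase i) ((SP i j y).coeff n)).coeff (m - if j ∈ J then n else 0) →
      (SP i j ((SC J (x + y)).coeff m)).coeff n
      = (SC (J.erase i) ((SP i j (x + y)).coeff n)).coeff (m - if j ∈ J then n else 0) := by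
    intro x y h1 h2
    rw [map_add, HahnSeries.coeff_add, map_add, HahnSeries.coeff_add, h1, h2, map_add (SP i j),
      HahnSeries.coeff_add, map_add (SC _), HahnSeries.coeff_add]
  refine hadd _ _ ?_ ?_
  · refine Finset.sum_induction _ (fun x => (SP i j ((SC J x).coeff m)).coeff n
      = (SC (J.erase i) ((SP i j x).coeff n)).coeff (m - if j ∈ J then n else 0)) hadd (by simp) ?_
    intro r _
    have hcf := (Vfix_iff _ _ _).1 (PS_fix _ i j _ (hc r))
    have hcs := SC_congr J (J.erase i) (fun s hs => by simp [Finset.ne_of_mem_erase hs]) _ (hc r)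
    have hV : ∀ q, (SC J (c r)).coeff q ∈ Vfix i j :=
      SC_coeff_mem (Vfix i j) (fun c => SP_const i j c)
        (fun s hs => Vfix_zv i j s (Finset.ne_of_mem_erase hs))
        (fun s hs => Vfix_inv _ _ _ (Vfix_zv i j s (Finset.ne_of_mem_erase hs)))
        (fun s hs t ht _ => Vfix_inv _ _ _ (sub_mem (Vfix_zv i j s (Finset.ne_of_mem_erase hs))
          (Vfix_zv i j t (Finset.ne_of_mem_erase ht)))) J _ (hc r)
    rw [map_mul (SC J), SC_xe i j hij J hJ, HahnSeries.coeff_mul_single, map_mul, SP_xe i j hij,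
      (Vfix_iff _ _ _).1 (hV _), map_mul, SP_xe i j hij, hcf, HahnSeries.C_apply, HahnSeries.C_apply,
      HahnSeries.single_mul_single, HahnSeries.single_mul_single, mul_one, mul_one, zero_add,
      HahnSeries.coeff_single, HahnSeries.coeff_single]
    by_cases h : n = e r
    · rw [if_pos h, if_pos h, ← hcs, h]
    · rw [if_neg h, if_neg h]; simp
  · have hV : ∀ q, (SC J y).coeff q ∈ Vreg i j :=
      SC_coeff_mem (Vreg i j) (fun c => Vreg_const i j c) (fun s _ => (Vreg_zv i j s).1)
        (fun s _ => (Vreg_zv i j s).2) (fun s _ t _ h => Vreg_inv i j s t h.1 h.2) J y hy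
    rw [map_mul (SC J), SC_xe i j hij J hJ, HahnSeries.coeff_single_mul, map_mul, SP_xe i j hij,
      HahnSeries.coeff_single_mul, Vreg_coeff i j _ (hV _) _ (by omega), map_mul, SP_xe i j hij,
      HahnSeries.coeff_single_mul, Vreg_coeff i j y (PB_Vreg _ i j y hy) _ (by omega)]
    simp

lemma drop_var [CharZero k] (D : Fin l → Derivation k (RF k l) (RF k l)) (hD : IsPartialDeriv D)
    (S : Finset (Fin l)) (j s : Fin l) (hj : j ∈ S) (hs : s ∈ S) (hjs : j ≠ s) (x : RF k l)
    (hx : x ∈ PS k S) (h : D j x = 0) : x ∈ PS k (S.erase j) := by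
  haveI := charZero_RF (k := k) (l := l)
  have h1 := SP_Di D hD j s x
  rw [h, map_zero, mul_zero] at h1
  have h2 : ∀ n, n ≠ 0 → (SP j s x).coeff n = 0 := by
    intro n hn
    have h3 := congrArg (fun f => f.coeff n) h1
    simp only [cw_coeff, HahnSeries.coeff_zero] at h3
    have h4 : (n : RF k l) * (SP j s x).coeff n = 0 := h3.symm
    exact (mul_eq_zero.1 h4).resolve_left (by exact_mod_cast hn)
  have hb := rho_PS S j s hj hs hjs x hx 0
  have h5 : SP j s x = HahnSeries.C ((SP j s x).coeff 0) := by
    ext n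
    rw [HahnSeries.C_apply, HahnSeries.coeff_single]
    split_ifs with hn
    · rw [hn]
    · exact h2 n hn
  have h6 : x = (SP j s x).coeff 0 := by
    refine RingHom.injective (SP (k := k) j s) ?_
    rw [(Vfix_iff _ _ _).1 (PS_fix S j s _ hb), ← h5]
  rw [h6]; exact hb

end Comm

section Main
variable {l : ℕ}

lemma hom_iff (S : Finset (Fin l)) (d : ℤ) (α : RF k l) :
    IsHomogeneousOn S d α ↔ SC S α = HahnSeries.single d α := by
  have h : r2l (RF k l) (RatFunc.X ^ d * RatFunc.C α) = HahnSeries.single d α := by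
    rw [map_mul, map_zpow₀, ratC, ratX, single_zp _ _ one_ne_zero, HahnSeries.C_apply,
      HahnSeries.single_mul_single]
    simp
  rw [← h]
  exact (RingHom.injective (r2l (RF k l))).eq_iff.symm

lemma hom_H (D : Fin l → Derivation k (RF k l) (RF k l)) (hD : IsPartialDeriv D) (d : ℤ) (α : RF k l)
    (h : SC Finset.univ α = HahnSeries.single d α) : dsum D Finset.univ zv α = (d : RF k l) * α := by
  have h1 := congrArg (fun f => f.coeff d) (SC_H D hD Finset.univ α)
  simp only [cw_coeff, h, HahnSeries.coeff_single_same] at h1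
  exact h1

lemma rho_F (D : Fin l → Derivation k (RF k l) (RF k l)) (hD : IsPartialDeriv D) (i j : Fin l)
    (hij : i ≠ j) (α : RF k l)
    (hF : dsum D Finset.univ (fun s => zv s ^ 2) α + 4 * (∑ s, zv s) * α = 0) (n : ℤ) :
    dsum D {i}ᶜ (fun s => zv s ^ 2) ((SP i j α).coeff n) + 4 * (∑ s ∈ {i}ᶜ, zv s) * (SP i j α).coeff n
      + (2 * (n : RF k l) + 4) * zv j * (SP i j α).coeff n + ((n : RF k l) + 3) * (SP i j α).coeff (n - 1) = 0 := by
  have h1 := congrArg (SP i j) hF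
  have h2 : SP i j (4 * (∑ s, zv s) : RF k l)
      = HahnSeries.C (4 * (∑ s ∈ {i}ᶜ, zv s) + 4 * zv j) + HahnSeries.single 1 4 := by
    have h3 : (∑ s, zv s : RF k l) = zv i + ∑ s ∈ {i}ᶜ, zv s := by
      rw [← Fintype.sum_eq_add_sum_compl]
    have h4 : SP i j (∑ s ∈ {i}ᶜ, zv s : RF k l) = HahnSeries.C (∑ s ∈ {i}ᶜ, zv s) := by
      rw [map_sum, map_sum]
      exact Finset.sum_congr rfl fun s hs => SP_zv_ne i j s (by simpa using hs)
    have h5 : (HahnSeries.single (1:ℤ) (4 : RF k l)) = 4 * HahnSeries.single 1 1 := by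
      rw [← map_ofNat (HahnSeries.C : RF k l →+* LaurentSeries (RF k l)) 4, HahnSeries.C_apply,
        HahnSeries.single_mul_single]
      simp
    rw [h3, map_mul, map_add, SP_zv_self, h4, h5, map_add, map_mul, map_mul, map_ofNat, map_ofNat]
    ring
  rw [map_add, map_mul, h2, SP_F D hD i j hij, map_zero] at h1
  have h6 := congrArg (fun f => f.coeff n) h1
  simp only [HahnSeries.coeff_add, add_mul, HahnSeries.C_apply, HahnSeries.coeff_single_mul, cw_coeff,
    HahnSeries.coeff_zero, cD_apply, sub_zero] at h6
  have h7 : ∀ (m : ℤ) (a : RF k l), thetaE m a = (m : RF k l) * a := fun m a => rfl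
  rw [h7, h7] at h6
  push_cast at h6
  rw [← h6]; ring

lemma F_sum (D : Fin l → Derivation k (RF k l) (RF k l)) (S : Finset (Fin l)) (x : RF k l) :
    ∑ s ∈ S, ((zv s) ^ 2 * D s x + 4 * zv s * x)
      = dsum D S (fun s => zv s ^ 2) x + 4 * (∑ s ∈ S, zv s) * x := by
  rw [dsum_apply, Finset.sum_add_distrib, Finset.mul_sum, Finset.sum_mul]

theorem main9 [CharZero k] (hl : 3 ≤ l)
    (D : Fin l → Derivation k (RF k l) (RF k l)) (hD : IsPartialDeriv D)
    (α : RF k l) (hadm : Admissible D Finset.univ α)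
    (i j : Fin l) (hij : i ≠ j) :
    Admissible D ({i, j}ᶜ : Finset (Fin l)) (rho i j (-4) α) ∧
    rho i j (-3) α = 0 ∧
    Admissible D ({i}ᶜ : Finset (Fin l)) (rho i j (-2) α) := by
  have := charZero_RF (k := k) (l := l)
  obtain ⟨hPhi, -, hreg, hhom, hcomp⟩ := hadm
  have hPS := Phi_PS α hPhi
  rw [hom_iff, Finset.card_univ, Fintype.card_fin] at hhom
  have hH := hom_H D hD _ α hhom
  have hF := hreg
  rw [F_sum] at hF
  have hE : EE D α = 0 := EE_zero D hD α hPhi (by rw [hH]; push_cast; ring) hF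
  have hEr : ∀ n, EE D ((SP i j α).coeff n) = 0 := by
    intro n
    have h1 := SP_E D hD i j hij α
    have h2 := congrArg (fun f => f.coeff n) h1
    simp only [cw_coeff, cD_apply] at h2
    have h3 : dsum D Finset.univ (fun _ => 1) α = 0 := hE
    rw [← h2, h3]; simp
  have hcoef : ∀ J : Finset (Fin l), ∀ n : ℤ, (n < 0 ∨ n = 1) → (SC J α).coeff (n - 2 * J.card) = 0 := by
    intro J n hn
    have := hcomp J (Finset.subset_univ _) n hn
    rw [component_eq, Finset.sum_const, nsmul_eq_mul] at this
    rw [← this]; congr 1; ring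
  have hpair : ∀ m : ℤ, (m < -4 ∨ m = -3) → ∀ n, (SC {j} ((SP i j α).coeff n)).coeff (m - n) = 0 := by
    intro m hm n
    have h1 := commute_SC i j hij {i, j} (by simp) α hPS m n
    have h2 := hcoef {i, j} (m + 4) (by omega)
    rw [Finset.card_pair hij] at h2
    have h3 : m + 4 - 2 * ((2 : ℕ) : ℤ) = m := by push_cast; ring
    rw [h3] at h2
    rw [h2, if_pos (by simp), Finset.erase_insert (by simpa using hij)] at h1
    rw [← h1]; simp
  have hz : ∀ m : ℤ, (m < -4 ∨ m = -3) → (SP i j α).coeff m = 0 := by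
    intro m hm
    refine zero_of_EE D hD j _ (hEr m) ?_
    have := hpair m hm m
    rwa [sub_self] at this
  have h5 := hz (-5) (by omega)
  have h3 := hz (-3) (by omega)
  have hDj : D j ((SP i j α).coeff (-4)) = 0 := by
    refine zero_of_EE D hD j _ ?_ ?_
    · rw [comm_ED D hD, hEr, map_zero]
    · have h1 := hpair (-3) (by omega) (-4)
      have h2 := congrArg (fun f => f.coeff 1) (SC_mem D hD {j} j (by simp) ((SP i j α).coeff (-4)))
      simp only [HahnSeries.coeff_single_mul, cw_coeff, cD_apply] at h2
      norm_num at h1 h2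
      rw [h2, h1, map_zero]
  have hrPS : ∀ n, (SP i j α).coeff n ∈ PS k (Finset.univ.erase i) := fun n =>
    rho_PS _ i j (Finset.mem_univ i) (Finset.mem_univ j) hij α hPS n
  have hpc : ({i, j}ᶜ : Finset (Fin l)) = (Finset.univ.erase i).erase j := by
    ext s; simp [and_comm]
  have hj1 : j ∈ Finset.univ.erase i := by simp [hij.symm]
  have hβ : (SP i j α).coeff (-4) ∈ PS k ((Finset.univ.erase i).erase j) := by
    have : ((Finset.univ.erase i).erase j).Nonempty := by
      rw [← Finset.card_pos, Finset.card_erase_of_mem hj1, Finset.card_erase_of_mem (Finset.mem_univ _),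
        Finset.card_univ, Fintype.card_fin]
      omega
    obtain ⟨s, hs⟩ := this
    exact drop_var D hD _ j s hj1 (Finset.mem_of_mem_erase hs) (Finset.ne_of_mem_erase hs).symm _ (hrPS _) hDj
  have hhr : ∀ n, SC (Finset.univ.erase i) ((SP i j α).coeff n)
      = HahnSeries.single (-(2 * (l : ℤ)) - n) ((SP i j α).coeff n) := by
    intro n
    ext q
    have h1 := commute_SC i j hij Finset.univ (by simp) α hPS (q + n) n
    rw [if_pos (Finset.mem_univ _), add_sub_cancel_right] at h1
    rw [← h1, hhom, HahnSeries.coeff_single, HahnSeries.coeff_single]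
    by_cases h : q + n = -(2 * (l : ℤ))
    · rw [if_pos h, if_pos (by omega)]
    · rw [if_neg h, if_neg (by omega)]; simp
  have hc0 : ∀ J : Finset (Fin l), i ∉ J → j ∉ J → ∀ q n : ℤ, (q < 0 ∨ q = 1) →
      component J (fun _ => 2) q ((SP i j α).coeff n) = 0 := by
    intro J hi hj q n hq
    have h1 := commute_SC i j hij J (by simp [hi, hj]) α hPS (q - 2 * J.card) n
    rw [hcoef J q hq, if_neg hj, Finset.erase_eq_of_notMem hi] at h1
    rw [component_eq, Finset.sum_const, nsmul_eq_mul]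
    have e : q - (J.card : ℤ) * 2 = q - 2 * J.card - 0 := by ring
    rw [e, ← h1]; simp
  rw [rho_eq, rho_eq, rho_eq]
  refine ⟨⟨PS_Phi _ _ hβ, ?_, ?_, ?_, ?_⟩, h3, ⟨PS_Phi _ _ (hrPS _), ?_, ?_, ?_, ?_⟩⟩
  · rw [hpc]; exact PS_depends _ _ hβ
  · have h1 := rho_F D hD i j hij α hF (-4)
    norm_num at h1
    rw [h5, ← F_sum, Finset.compl_singleton, ← Finset.add_sum_erase _ _ hj1, hDj, ← hpc] at h1
    rw [← h1]; ring
  · rw [hom_iff, hpc, SC_congr _ (Finset.univ.erase i) (fun s hs => by simp [Finset.mem_of_mem_erase hs, hs]) _ hβ,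
      hhr, Finset.card_erase_of_mem hj1, Finset.card_erase_of_mem (Finset.mem_univ _),
      Finset.card_univ, Fintype.card_fin]
    rw [show (-(2 * ((l - 1 - 1 : ℕ) : ℤ))) = -(2 * (l : ℤ)) - -4 by omega]
  · intro J hJ n hn
    refine hc0 J (fun h => ?_) (fun h => ?_) n _ hn
    · have := hJ h; simp at this
    · have := hJ h; simp at this
  · rw [Finset.compl_singleton]; exact PS_depends _ _ (hrPS _)
  · have h1 := rho_F D hD i j hij α hF (-2)
    norm_num at h1
    rw [h3, ← F_sum] at h1
    simpa using h1
  · rw [hom_iff, Finset.compl_singleton, hhr, Finset.card_erase_of_mem (Finset.mem_univ _),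
      Finset.card_univ, Fintype.card_fin]
    rw [show (-(2 * ((l - 1 : ℕ) : ℤ))) = -(2 * (l : ℤ)) - -2 by omega]
  · intro J hJ n hn
    have hi : i ∉ J := fun h => by have := hJ h; simp at this
    by_cases hj : j ∈ J
    · have h1 := commute_SC i j hij (insert i J) (by simp [hj]) α hPS (n - 2 * (insert i J).card) (-2)
      rw [hcoef _ n hn, if_pos (by simp [hj]), Finset.erase_insert hi, Finset.card_insert_of_notMem hi] at h1
      rw [component_eq, Finset.sum_const, nsmul_eq_mul]
      have e : n - (J.card : ℤ) * 2 = n - 2 * ((J.card + 1 : ℕ) : ℤ) - -2 := by push_cast; ring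
      rw [e, ← h1]; simp
    · exact hc0 J hi hj n _ hn

end Main

end Helpers

end Griess

namespace Griess

/-- for `l ≥ 3`, `α ∈ R^l` and `1 ≤ i < j ≤ l`:
(i) `ρ^{(-4)}_{ij}α` does not depend on `z_i, z_j` and is an admissible function of
the remaining `l-2` variables; (ii) `ρ^{(-3)}_{ij}α = 0`; (iii) `ρ^{(-2)}_{ij}α` is
an admissible function of the `l-1` variables other than `z_i`. -/
theorem statement9 {k : Type} [Field k] [CharZero k] {l : ℕ} (hl : 3 ≤ l)
    (D : Fin l → Derivation k (RF k l) (RF k l)) (hD : IsPartialDeriv D)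
    (α : RF k l) (hadm : Admissible D Finset.univ α)
    (i j : Fin l) (hij : i < j) :
    Admissible D ({i, j}ᶜ : Finset (Fin l)) (rho i j (-4) α) ∧
    rho i j (-3) α = 0 ∧
    Admissible D ({i}ᶜ : Finset (Fin l)) (rho i j (-2) α) := by
  exact main9 hl D hD α hadm i j (ne_of_lt hij)

end Griess
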